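/- arXiv:1509.01731 — 4 statements merged into one kernel-verified Lean document; each statement's English description precedes it below -/
import Mathlib

section
/- Let n, k ∈ ℕ and γ, p, q ∈ ℝ satisfy 0 > γ > k − n and q > p ≥ 1, let B ⊆ ℝ^n be an open ball and μ a Radon measure on B with μ(B) < ∞, and define φ_γ(x) = ∫_B |x−y|^γ dμ(y) and φ_{γ−k}(x) = ∫_B |x−y|^{γ−k} dμ(y). If φ_γ ∈ L^q_loc(B) and 1 ≤ p < (n+γ)q/(n+γ+(q−1)k), then φ_{γ−k} ∈ L^p_loc(B). -/
/-!
The kernel exponent `γ - k` is a convex combination of `γ` and an exponent `s > -n`: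
`γ - k = (1 - t) γ + t s` with `s = γ - k / t`, where `k / (n + γ) < t` makes `-n < s`.
Hölder's inequality in the measure `μ` gives `φ_{γ-k} ≤ φ_γ ^ (1 - t) * φ_s ^ t`
(`phiK_interpolation`). By Tonelli and the local integrability of `|x| ^ s`, the potential `φ_s`
is integrable over the ball (`lintegral_phiK_lt_top`). Finally, when
`p (1 - t) / q + p t ≤ 1`, one has `(u ^ (1 - t) * v ^ t) ^ p ≤ 1 + u ^ q + v` pointwise, so no
second use of Hölder is needed. The upper bound on `p` says exactly that the window
`k / (n + γ) < t < (q - p) / (p (q - 1))` is nonempty.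
-/

open MeasureTheory ENNReal
open scoped ENNReal NNReal

noncomputable section

/-- `n`-dimensional Euclidean space. -/
abbrev Euc (n : ℕ) : Type := EuclideanSpace ℝ (Fin n)

/-- The Riesz-type potential `φ_s(x) = ∫_B |x-y|^s dμ(y)`, with values in `[0,∞]`. -/
def phiK {n : ℕ} (B : Set (Euc n)) (μ : Measure (Euc n)) (s : ℝ) : Euc n → ℝ≥0∞ :=
  fun x => ∫⁻ y in B, (ENNReal.ofReal ‖x - y‖) ^ s ∂μ

lemma lintegral_ball_norm_rpow_lt_top {n : ℕ} (hn : 1 ≤ n) {s : ℝ} (hs : -(n : ℝ) < s) (r : ℝ) :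
    ∫⁻ x in Metric.ball (0 : Euc n) r, ENNReal.ofReal ‖x‖ ^ s < ⊤ := by
  have hint : IntegrableOn (fun x : Euc n => ‖x‖ ^ s) (Metric.ball 0 r) := by
    refine integrableOn_ball_of_norm_le_rpow (C := 1) (α := -s) (by simpa using hn)
      (by simp; linarith) (Filter.Eventually.of_forall fun x => ?_) ?_
    · simp [abs_of_nonneg (Real.rpow_nonneg (norm_nonneg x) s)]
    · exact (measurable_norm.pow_const s).aestronglyMeasurable
  have hfin := hint.hasFiniteIntegral
  rw [hasFiniteIntegral_iff_enorm] at hfin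
  refine lt_of_le_of_lt (le_of_eq (lintegral_congr_ae (ae_restrict_of_ae ?_))) hfin
  have : Nonempty (Fin n) := ⟨⟨0, hn⟩⟩
  -- At the origin the extended power is `⊤` for negative `s` whereas the real power is finite;
  -- the origin is a null set because the dimension is positive.
  have h0 : ∀ᵐ x : Euc n, x ≠ 0 := by
    simp [ae_iff]
  filter_upwards [h0] with x hx
  have hx' : 0 < ‖x‖ := norm_pos_iff.2 hx
  rw [ENNReal.ofReal_rpow_of_pos hx', Real.enorm_eq_ofReal (Real.rpow_nonneg hx'.le s)]

lemma measurable_kernel {n : ℕ} (s : ℝ) :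
    Measurable fun z : Euc n × Euc n => ENNReal.ofReal ‖z.1 - z.2‖ ^ s := by
  fun_prop

/-- A potential of order `s > -n` of a finite measure on a ball is integrable on the ball,
by Tonelli and translation invariance of Lebesgue measure. -/
lemma lintegral_phiK_lt_top {n : ℕ} (hn : 1 ≤ n) {s : ℝ} (hs : -(n : ℝ) < s)
    (c : Euc n) (R : ℝ) (μ : Measure (Euc n)) (hμ : μ (Metric.ball c R) < ⊤)
    {K : Set (Euc n)} (hK : K ⊆ Metric.ball c R) :
    ∫⁻ x in K, phiK (Metric.ball c R) μ s x < ⊤ := by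
  have : IsFiniteMeasure (μ.restrict (Metric.ball c R)) := ⟨by simpa using hμ⟩
  unfold phiK
  rw [lintegral_lintegral_swap (measurable_kernel s).aemeasurable]
  set C := ∫⁻ x in Metric.ball (0 : Euc n) (2 * R), ENNReal.ofReal ‖x‖ ^ s with hC
  have hCfin : C < ⊤ := lintegral_ball_norm_rpow_lt_top hn hs _
  have hbound : ∀ y ∈ Metric.ball c R, ∫⁻ x in K, ENNReal.ofReal ‖x - y‖ ^ s ≤ C := by
    intro y hy
    calc ∫⁻ x in K, ENNReal.ofReal ‖x - y‖ ^ s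
        ≤ ∫⁻ x in Metric.ball y (2 * R), ENNReal.ofReal ‖x - y‖ ^ s := by
          refine lintegral_mono_set fun x hx => ?_
          have h1 := Metric.mem_ball.1 (hK hx)
          have h2 := Metric.mem_ball'.1 hy
          exact Metric.mem_ball.2 (by linarith [dist_triangle x c y])
      _ = ∫⁻ x, (Metric.ball (0 : Euc n) (2 * R)).indicator
            (fun x => ENNReal.ofReal ‖x‖ ^ s) (x - y) := by
          rw [← lintegral_indicator Metric.isOpen_ball.measurableSet]
          refine lintegral_congr fun x => ?_
          simp [Set.indicator, dist_eq_norm]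
      _ = C := by
          rw [lintegral_sub_right_eq_self
            ((Metric.ball (0 : Euc n) (2 * R)).indicator (fun x => ENNReal.ofReal ‖x‖ ^ s)) y,
            lintegral_indicator Metric.isOpen_ball.measurableSet]
  calc _ ≤ ∫⁻ _ in Metric.ball c R, C ∂μ :=
        setLIntegral_mono measurable_const hbound
    _ = C * μ (Metric.ball c R) := by simp
    _ < ⊤ := ENNReal.mul_lt_top hCfin hμ

/-- Hölder interpolation between the potentials of orders `a` and `b`. Negativity of `a` and `b`
keeps the kernel identity valid on the diagonal, where all three kernels equal `⊤`. -/
lemma phiK_interpolation {n : ℕ} (B : Set (Euc n)) (μ : Measure (Euc n)) {a b t : ℝ}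
    (ha : a < 0) (hb : b < 0) (ht0 : 0 < t) (ht1 : t < 1) (x : Euc n) :
    phiK B μ (a * (1 - t) + b * t) x ≤ phiK B μ a x ^ (1 - t) * phiK B μ b x ^ t := by
  have hm : ∀ s : ℝ, Measurable fun y : Euc n => ENNReal.ofReal ‖x - y‖ ^ s := fun s => by
    fun_prop
  unfold phiK
  refine le_trans (le_of_eq (lintegral_congr fun y => ?_))
    (ENNReal.lintegral_mul_norm_pow_le (hm a).aemeasurable (hm b).aemeasurable
      (by linarith) ht0.le (by ring))
  rw [← ENNReal.rpow_mul, ← ENNReal.rpow_mul]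
  have h1 : a * (1 - t) < 0 := mul_neg_of_neg_of_pos ha (by linarith)
  have h2 : b * t < 0 := mul_neg_of_neg_of_pos hb ht0
  rcases eq_or_ne (ENNReal.ofReal ‖x - y‖) 0 with h | h
  · rw [h, ENNReal.zero_rpow_of_neg h1, ENNReal.zero_rpow_of_neg h2,
      ENNReal.zero_rpow_of_neg (by linarith), ENNReal.top_mul_top]
  · exact ENNReal.rpow_add _ _ h ENNReal.ofReal_ne_top

lemma rpow_mul_rpow_le_one_add {u v : ℝ≥0∞} {A D : ℝ} (hA : 0 ≤ A) (hD : 0 ≤ D)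
    (hAD : A + D ≤ 1) : u ^ A * v ^ D ≤ 1 + u + v := by
  have hM : 1 ≤ 1 + u + v := by rw [add_assoc]; exact le_self_add
  calc u ^ A * v ^ D ≤ (1 + u + v) ^ A * (1 + u + v) ^ D := by
        gcongr
        · exact le_trans le_add_self le_self_add
        · exact le_add_self
    _ = (1 + u + v) ^ (A + D) := (ENNReal.rpow_add_of_nonneg _ _ hA hD).symm
    _ ≤ (1 + u + v) ^ (1 : ℝ) := ENNReal.rpow_le_rpow_of_exponent_le hM hAD
    _ = _ := ENNReal.rpow_one _

/-- The bound on `p` leaves room for an interpolation parameter: with `a = n + γ`, some `t`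
satisfies `0 < t < 1`, `k / a < t` and `p (1 - t) / q + p t ≤ 1`. -/
lemma exists_interpolation_parameter {a k p q : ℝ} (hk : 0 ≤ k) (hka : k < a) (hp : 1 ≤ p)
    (hpq : p < q) (hb : p < a * q / (a + (q - 1) * k)) :
    ∃ t, 0 < t ∧ t < 1 ∧ k < a * t ∧ p * (1 - t) / q + p * t ≤ 1 := by
  have ha : 0 < a := by linarith
  have hq : 0 < q - 1 := by linarith
  have hden : 0 < a + (q - 1) * k := by positivity
  rw [lt_div_iff₀ hden] at hb
  have hpq' : 0 < p * (q - 1) := by positivity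
  -- `T` is the value of `t` at which the second constraint is an equality.
  set T := (q - p) / (p * (q - 1)) with hT
  have hT1 : T ≤ 1 := by rw [hT, div_le_one hpq']; nlinarith
  have hkT : k / a < T := by
    rw [hT, div_lt_div_iff₀ ha hpq']; nlinarith
  have hTe : T * (p * (q - 1)) = q - p := div_mul_cancel₀ _ hpq'.ne'
  obtain ⟨t, ht1, ht2⟩ := exists_between hkT
  have hka0 : 0 ≤ k / a := by positivity
  refine ⟨t, by linarith, by linarith, ?_, ?_⟩
  · rw [div_lt_iff₀ ha] at ht1; linarith
  · have hq0 : 0 < q := by linarith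
    rw [div_add' _ _ _ hq0.ne', div_le_one hq0]
    nlinarith

/-- Lemma 1 (i). If `φ_γ ∈ L^q_loc(B)` and
`1 ≤ p < (n+γ)q/(n+γ+(q-1)k)`, then `φ_{γ-k} ∈ L^p_loc(B)`. -/
theorem stmt7 {n k : ℕ} (γ p q : ℝ) (hγ0 : γ < 0) (hγ : (k : ℝ) - n < γ)
    (hp1 : 1 ≤ p) (hpq : p < q)
    (c : Euc n) (R : ℝ) (hR : 0 < R) (B : Set (Euc n)) (hB : B = Metric.ball c R)
    (μ : Measure (Euc n)) (hμ : μ B < ⊤)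
    (hφγ : ∀ K, K ⊆ B → IsCompact K → ∫⁻ x in K, phiK B μ γ x ^ q < ⊤)
    (hpbound : p < ((n : ℝ) + γ) * q / ((n : ℝ) + γ + (q - 1) * k)) :
    ∀ K, K ⊆ B → IsCompact K → ∫⁻ x in K, phiK B μ (γ - k) x ^ p < ⊤ := by
  subst hB
  intro K hK hKc
  have hk0 : (0 : ℝ) ≤ k := Nat.cast_nonneg k
  have hn : 1 ≤ n := by
    have : (0 : ℝ) < n := by linarith
    exact_mod_cast this
  obtain ⟨t, ht0, ht1, hkt, hexp⟩ :=
    exists_interpolation_parameter hk0 (a := (n : ℝ) + γ) (by linarith) hp1 hpq hpbound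
  have hp0 : 0 < p := by linarith
  have hq0 : 0 < q := by linarith
  set s := γ - k / t with hs
  have hs0 : s < 0 := by
    have : (0 : ℝ) ≤ k / t := by positivity
    linarith
  have hsn : -(n : ℝ) < s := by
    have : (k : ℝ) / t < n + γ := by rwa [div_lt_iff₀ ht0]
    linarith
  have hcomb : γ * (1 - t) + s * t = γ - k := by
    rw [hs]; field_simp; ring
  have : IsFiniteMeasure (μ.restrict (Metric.ball c R)) := ⟨by simpa using hμ⟩
  have hpt : ∀ x, phiK (Metric.ball c R) μ (γ - k) x ^ p ≤
      1 + phiK (Metric.ball c R) μ γ x ^ q + phiK (Metric.ball c R) μ s x := by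
    intro x
    have h1 := phiK_interpolation (Metric.ball c R) μ hγ0 hs0 ht0 ht1 x
    rw [hcomb] at h1
    refine le_trans (ENNReal.rpow_le_rpow h1 hp0.le) ?_
    rw [ENNReal.mul_rpow_of_nonneg _ _ hp0.le, ← ENNReal.rpow_mul, ← ENNReal.rpow_mul]
    have h2 : (1 - t) * p = q * (p * (1 - t) / q) := by field_simp
    rw [h2, ENNReal.rpow_mul, mul_comm t p]
    refine rpow_mul_rpow_le_one_add (div_nonneg ?_ hq0.le) (by positivity) hexp
    exact mul_nonneg hp0.le (by linarith)
  have hmeas : Measurable (phiK (Metric.ball c R) μ s) :=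
    (measurable_kernel s).lintegral_prod_right'
  calc ∫⁻ x in K, phiK (Metric.ball c R) μ (γ - k) x ^ p
      ≤ ∫⁻ x in K, (1 + phiK (Metric.ball c R) μ γ x ^ q + phiK (Metric.ball c R) μ s x) :=
        lintegral_mono hpt
    _ = volume K + (∫⁻ x in K, phiK (Metric.ball c R) μ γ x ^ q)
          + ∫⁻ x in K, phiK (Metric.ball c R) μ s x := by
        rw [lintegral_add_right _ hmeas, lintegral_add_left measurable_const]
        simp
    _ < ⊤ := ENNReal.add_lt_top.2 ⟨ENNReal.add_lt_top.2 ⟨hKc.measure_lt_top, hφγ K hK hKc⟩,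
        lintegral_phiK_lt_top hn hsn c R μ hμ hK⟩
end
end

section
/- Let n, k ∈ ℕ with n > 2k, let B ⊆ ℝ^n be an open ball and μ a Radon measure on B with μ(B) < ∞, and define ψ(x) = ∫_B log(1/|x−y|) dμ(y) and φ_{−k}(x) = ∫_B |x−y|^{−k} dμ(y). If ψ ∈ L^∞_loc(B), then φ_{−k} ∈ L^{n/k}_loc(B). -/
/-!
Write `ν` for `μ` restricted to the ball `B`, and `p = n / k > 2`. By Jensen's inequality with
exponent `p - 1` (finite measure `ν`),
`φ(x) ^ p = φ(x) * φ(x) ^ (p - 1) ≤ ν(B) ^ (p - 2) * ∬ |x-y|^{-k} |x-z|^{-(n-k)} dν(y) dν(z)`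
(`lintegral_potential_le` combines this with Tonelli). The exponents `k` and `n - k` are both
less than `n` and add up to `n`, so for `y ≠ z` in `B` the integral over `x ∈ B` of the product of
the two kernels is at most `C * (1 + log (1 / |y-z|))`, up to an additive normalisation of the
logarithm (`lintegral_two_kernels`). Hence the `p`-th power integral of `φ` is controlled by the
logarithmic energy of `ν`, which is an integral of `ψ`.

Two points need care. The bound on `ψ` is only local, so `ν` is first cut off to a compact
neighbourhood `K'` of `K`; the remaining mass stays at a positive distance from `K` and contributes
a bounded function there. The diagonal `y = z` must be negligible, i.e. `ν` must have no atoms: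
at an atom `y` the potential `ψ` would tend to `∞` (`measure_singleton_eq_zero`).

When `k = 0` the exponent `n / k` is `0` in Lean and the claim is that `K` has finite volume.
-/

open MeasureTheory ENNReal
open scoped ENNReal NNReal

noncomputable section

/-! ### Integrals of radial functions -/

/-- Polar coordinates for nonnegative radial functions. -/
lemma lintegral_radial {n : ℕ} (hn : 0 < n) (g : ℝ → ℝ≥0∞) (hg : Measurable g) :
    ∫⁻ x : Euc n, g ‖x‖ = (volume : Measure (Euc n)).toSphere Set.univ *
      ∫⁻ r in Set.Ioi (0 : ℝ), ENNReal.ofReal (r ^ (n - 1)) * g r := by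
  have hd : Module.finrank ℝ (Euc n) = n := by simp
  have : Nontrivial (Euc n) := Module.nontrivial_of_finrank_pos (R := ℝ) (by omega)
  have h1 : ∫⁻ x : Euc n, g ‖x‖ = ∫⁻ x : ({(0 : Euc n)}ᶜ : Set (Euc n)), g ‖x.1‖
      ∂((volume : Measure (Euc n)).comap Subtype.val) := by
    rw [lintegral_subtype_comap (measurableSet_singleton _).compl (fun x : Euc n => g ‖x‖),
      restrict_compl_singleton]
  have h2 := (volume : Measure (Euc n)).measurePreserving_homeomorphUnitSphereProd.lintegral_comp_emb
    (Homeomorph.measurableEmbedding _) (fun p => g p.2.1)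
  simp only [homeomorphUnitSphereProd_apply_snd_coe] at h2
  rw [h1, h2, lintegral_prod _ (by fun_prop)]
  simp only [lintegral_const, hd]
  rw [mul_comm]
  congr 1
  rw [Measure.volumeIoiPow, lintegral_withDensity_eq_lintegral_mul _ (by fun_prop) (by fun_prop)]
  simp only [Pi.mul_apply]
  rw [lintegral_subtype_comap measurableSet_Ioi (fun r : ℝ => ENNReal.ofReal (r ^ (n-1)) * g r)]

/-- `∫_{|x-y|<s} |x-y|^{-m} dx ≤ C s^{n-m}` for `m < n`, with one constant for all `m`. -/
lemma lintegral_ball_pow {n : ℕ} (hn : 0 < n) : ∃ C : ℝ≥0∞, C ≠ ⊤ ∧ ∀ m : ℕ, m < n → 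
    ∀ (s : ℝ) (y : Euc n), 0 < s → ∫⁻ x in Metric.ball y s, ENNReal.ofReal ‖x - y‖ ^ (-(m : ℝ)) ≤
      C * ENNReal.ofReal s ^ ((n : ℝ) - m) := by
  refine ⟨(volume : Measure (Euc n)).toSphere Set.univ, measure_ne_top _ _, fun m hm s y hs => ?_⟩
  set g : ℝ → ℝ≥0∞ := (Set.Iio s).indicator (fun r => ENNReal.ofReal r ^ (-(m : ℝ))) with hgdef
  have hg : Measurable g := Measurable.indicator (by fun_prop) measurableSet_Iio
  have e1 : ∫⁻ x in Metric.ball y s, ENNReal.ofReal ‖x - y‖ ^ (-(m : ℝ)) = ∫⁻ x : Euc n, g ‖x‖ := by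
    rw [← lintegral_sub_right_eq_self (fun x : Euc n => g ‖x‖) y, ← lintegral_indicator measurableSet_ball]
    congr 1
  rw [e1, lintegral_radial hn g hg]
  gcongr
  calc ∫⁻ r in Set.Ioi (0 : ℝ), ENNReal.ofReal (r ^ (n - 1)) * g r
      ≤ ∫⁻ r in Set.Ioi (0 : ℝ), (Set.Ioo 0 s).indicator (fun _ => ENNReal.ofReal (s ^ (n - 1 - m))) r := by
        refine setLIntegral_mono' measurableSet_Ioi fun r hr => ?_
        have hr : 0 < r := hr
        by_cases hrs : r < s
        · simp only [hgdef, Set.indicator, Set.mem_Iio, hrs, if_true, Set.mem_Ioo, hr, and_self]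
          rw [ENNReal.ofReal_rpow_of_pos hr, ← ENNReal.ofReal_mul (by positivity)]
          apply ENNReal.ofReal_le_ofReal
          rw [Real.rpow_neg hr.le, Real.rpow_natCast]
          have : r ^ (n - 1) = r ^ (n - 1 - m) * r ^ m := by rw [← pow_add]; congr 1; omega
          rw [this, mul_assoc, mul_inv_cancel₀ (by positivity), mul_one]
          gcongr
        · simp [hgdef, Set.indicator, hrs]
    _ ≤ ∫⁻ r, (Set.Ioo 0 s).indicator (fun _ => ENNReal.ofReal (s ^ (n - 1 - m))) r :=
        setLIntegral_le_lintegral _ _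
    _ = ENNReal.ofReal s ^ ((n : ℝ) - m) := by
        rw [lintegral_indicator measurableSet_Ioo, setLIntegral_const, Real.volume_Ioo, sub_zero,
          ← ENNReal.ofReal_mul (by positivity), ← pow_succ, ENNReal.ofReal_rpow_of_pos hs,
          ← Nat.cast_sub hm.le, Real.rpow_natCast]
        congr 2; omega

/-- At the critical exponent `n` the integral over an annulus grows logarithmically. -/
lemma lintegral_annulus {n : ℕ} (hn : 0 < n) : ∃ C : ℝ≥0∞, C ≠ ⊤ ∧ 
    ∀ (s L : ℝ) (y : Euc n), 0 < s → s ≤ L → 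
      ∫⁻ x in {x | s ≤ ‖x - y‖ ∧ ‖x - y‖ < L}, ENNReal.ofReal ‖x - y‖ ^ (-(n : ℝ)) ≤
      C * ENNReal.ofReal (Real.log (L / s)) := by
  refine ⟨(volume : Measure (Euc n)).toSphere Set.univ, measure_ne_top _ _, fun s L y hs hsL => ?_⟩
  set g : ℝ → ℝ≥0∞ := (Set.Ico s L).indicator (fun r => ENNReal.ofReal r ^ (-(n : ℝ))) with hgdef
  have hg : Measurable g := Measurable.indicator (by fun_prop) measurableSet_Ico
  have hm : MeasurableSet {x : Euc n | s ≤ ‖x - y‖ ∧ ‖x - y‖ < L} :=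
    (measurableSet_Ico (a := s) (b := L)).preimage (f := fun x : Euc n => ‖x - y‖) (by fun_prop)
  have e1 : ∫⁻ x in {x | s ≤ ‖x - y‖ ∧ ‖x - y‖ < L}, ENNReal.ofReal ‖x - y‖ ^ (-(n : ℝ))
      = ∫⁻ x : Euc n, g ‖x‖ := by
    rw [← lintegral_sub_right_eq_self (fun x : Euc n => g ‖x‖) y, ← lintegral_indicator hm]
    congr 1
  rw [e1, lintegral_radial hn g hg]
  gcongr
  calc ∫⁻ r in Set.Ioi (0 : ℝ), ENNReal.ofReal (r ^ (n - 1)) * g r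
      ≤ ∫⁻ r in Set.Ioi (0 : ℝ), (Set.Icc s L).indicator (fun r => ENNReal.ofReal (1 / r)) r := by
        refine setLIntegral_mono' measurableSet_Ioi fun r hr => ?_
        have hr : 0 < r := hr
        by_cases hrs : r ∈ Set.Ico s L
        · simp only [hgdef, Set.indicator_of_mem hrs, 
            Set.indicator_of_mem (Set.Ico_subset_Icc_self hrs)]
          rw [ENNReal.ofReal_rpow_of_pos hr, ← ENNReal.ofReal_mul (by positivity)]
          apply ENNReal.ofReal_le_ofReal
          rw [Real.rpow_neg hr.le, Real.rpow_natCast]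
          have : r ^ n = r ^ (n - 1) * r := by rw [← pow_succ]; congr 1; omega
          rw [this]
          apply le_of_eq
          field_simp
        · simp only [hgdef, Set.indicator_of_notMem hrs, mul_zero]
          exact zero_le
    _ ≤ ∫⁻ r, (Set.Icc s L).indicator (fun r => ENNReal.ofReal (1 / r)) r :=
        setLIntegral_le_lintegral _ _
    _ = ENNReal.ofReal (Real.log (L / s)) := by
        have h0 : (0 : ℝ) ∉ Set.uIcc s L := by
          rw [Set.uIcc_of_le hsL]; simp [hs]
        rw [lintegral_indicator measurableSet_Icc, ← integral_one_div h0,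
          intervalIntegral.integral_of_le hsL, ← integral_Icc_eq_integral_Ioc,
          ofReal_integral_eq_lintegral_ofReal]
        · refine ContinuousOn.integrableOn_Icc fun r hr => ?_
          have : r ≠ 0 := (hs.trans_le hr.1).ne'
          exact ContinuousAt.continuousWithinAt (by fun_prop (disch := assumption))
        · filter_upwards [ae_restrict_mem measurableSet_Icc] with r hr
          have : 0 < r := hs.trans_le hr.1
          positivity

/-! ### The two-kernel estimate -/

/-- Jensen's inequality for a power `q > 1`, deduced from Hölder with the constant function `1`. -/
lemma jensen {α : Type*} [MeasurableSpace α] (ν : Measure α) (f : α → ℝ≥0∞) (hf : AEMeasurable f ν)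
    {q : ℝ} (hq : 1 < q) : (∫⁻ a, f a ∂ν) ^ q ≤ ν Set.univ ^ (q - 1) * ∫⁻ a, f a ^ q ∂ν := by
  have hc := Real.HolderConjugate.conjExponent hq
  have h := ENNReal.lintegral_mul_le_Lp_mul_Lq ν hc hf (g := fun _ => 1) aemeasurable_const
  have hq0 : 0 < q := by linarith
  calc (∫⁻ a, f a ∂ν) ^ q ≤ ((∫⁻ a, f a ^ q ∂ν) ^ (1 / q) * (ν Set.univ) ^ (1 / q.conjExponent)) ^ q := by
        gcongr
        simpa using h
    _ = _ := by
        rw [ENNReal.mul_rpow_of_nonneg _ _ hq0.le, ← ENNReal.rpow_mul, ← ENNReal.rpow_mul, mul_comm]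
        congr 2
        · rw [Real.conjExponent]; field_simp
        · rw [one_div_mul_cancel hq0.ne', ENNReal.rpow_one]

lemma rpow_neg_anti {a b : ℝ≥0∞} (h : a ≤ b) {s : ℝ} (hs : 0 ≤ s) : b ^ (-s) ≤ a ^ (-s) := by
  rw [ENNReal.rpow_neg, ENNReal.rpow_neg]
  exact ENNReal.inv_le_inv.2 (ENNReal.rpow_le_rpow h hs)

/-- Splitting at distance `|y-z| / 2` from `y` and `z`: near either point the other kernel is
bounded and the singularity is integrable; away from both the product is at most
`|x-y|^{-n} + |x-z|^{-n}`, whose integral is logarithmic. The term `log (2 * R + 1)` makes the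
logarithm nonnegative, as `2 * R + 1` exceeds the diameter of the ball. -/
lemma lintegral_two_kernels {n k : ℕ} (hk : 0 < k) (hkn : k < n) (c : Euc n) (R : ℝ) :
    ∃ C : ℝ≥0∞, C ≠ ⊤ ∧ ∀ y ∈ Metric.ball c R, ∀ z ∈ Metric.ball c R, y ≠ z →
      ∫⁻ x in Metric.ball c R, ENNReal.ofReal ‖x - y‖ ^ (-(k : ℝ)) *
          ENNReal.ofReal ‖x - z‖ ^ (-((n : ℝ) - k)) ≤
        C * (1 + ENNReal.ofReal (Real.log (2 * R + 1) + Real.log (1 / ‖y - z‖))) := by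
  obtain ⟨C₁, hC₁, h₁⟩ := lintegral_ball_pow (n := n) (by omega)
  obtain ⟨C₂, hC₂, h₂⟩ := lintegral_annulus (n := n) (by omega)
  refine ⟨2 * C₁ + 2 * C₂, by finiteness, fun y hy z hz hyz => ?_⟩
  set s : ℝ := ‖y - z‖ / 2 with hs
  have hyz' : 0 < ‖y - z‖ := norm_pos_iff.2 (sub_ne_zero.2 hyz)
  have hs0 : 0 < s := by positivity
  have diam : ∀ a ∈ Metric.ball c R, ∀ b ∈ Metric.ball c R, ‖a - b‖ < 2 * R + 1 := by
    intro a ha b hb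
    rw [Metric.mem_ball] at ha hb
    rw [← dist_eq_norm]
    linarith [dist_triangle_right a b c]
  have hsL : s ≤ 2 * R + 1 := by linarith [diam y hy z hz]
  have hk' : (0 : ℝ) < k := by exact_mod_cast hk
  have hkn' : (0 : ℝ) < (n : ℝ) - k := by
    have : (k : ℝ) < n := by exact_mod_cast hkn
    linarith
  let A : Euc n → Set (Euc n) := fun w => {x | s ≤ ‖x - w‖ ∧ ‖x - w‖ < 2 * R + 1}
  have hA : ∀ w, MeasurableSet (A w) := fun w =>
    (measurableSet_Ico (a := s) (b := 2 * R + 1)).preimage (f := fun x : Euc n => ‖x - w‖)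
      (by fun_prop)
  set σ := ENNReal.ofReal s with hσ
  have hσ0 : σ ≠ 0 := by simpa [hσ] using hs0
  have hσt : σ ≠ ⊤ := ENNReal.ofReal_ne_top
  -- Majorants on the regions near `y`, near `z`, and away from both (`F₃ y + F₃ z`).
  let F₁ : Euc n → ℝ≥0∞ := (Metric.ball y s).indicator
    (fun x => ENNReal.ofReal ‖x - y‖ ^ (-(k : ℝ)) * σ ^ (-((n : ℝ) - k)))
  let F₂ : Euc n → ℝ≥0∞ := (Metric.ball z s).indicator
    (fun x => ENNReal.ofReal ‖x - z‖ ^ (-((n - k : ℕ) : ℝ)) * σ ^ (-(k : ℝ)))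
  let F₃ : Euc n → Euc n → ℝ≥0∞ := fun w => (A w).indicator
    (fun x => ENNReal.ofReal ‖x - w‖ ^ (-(n : ℝ)))
  have hcast : ((n - k : ℕ) : ℝ) = (n : ℝ) - k := Nat.cast_sub hkn.le
  have hF₁ : ∫⁻ x, F₁ x ≤ C₁ := by
    rw [lintegral_indicator measurableSet_ball, lintegral_mul_const _ (by fun_prop)]
    calc _ ≤ C₁ * σ ^ ((n : ℝ) - k) * σ ^ (-((n : ℝ) - k)) := by
          gcongr
          exact h₁ k hkn s y hs0
      _ = C₁ := by rw [mul_assoc, ← ENNReal.rpow_add _ _ hσ0 hσt]; simp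
  have hF₂ : ∫⁻ x, F₂ x ≤ C₁ := by
    rw [lintegral_indicator measurableSet_ball, lintegral_mul_const _ (by fun_prop)]
    calc _ ≤ C₁ * σ ^ ((n : ℝ) - (n - k : ℕ)) * σ ^ (-(k : ℝ)) := by
          gcongr
          exact h₁ (n - k) (by omega) s z hs0
      _ = C₁ := by rw [mul_assoc, ← ENNReal.rpow_add _ _ hσ0 hσt, hcast]; simp
  set G := ENNReal.ofReal (Real.log (2 * R + 1) + Real.log (1 / ‖y - z‖)) with hG
  have hF₃ : ∀ w, ∫⁻ x, F₃ w x ≤ C₂ * (1 + G) := by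
    intro w
    rw [lintegral_indicator (hA w)]
    refine (h₂ s (2 * R + 1) w hs0 hsL).trans ?_
    gcongr
    have hL : 0 < 2 * R + 1 := hs0.trans_le hsL
    have : Real.log ((2 * R + 1) / s) =
        Real.log 2 + (Real.log (2 * R + 1) + Real.log (1 / ‖y - z‖)) := by
      rw [hs, Real.log_div hL.ne' (by positivity), Real.log_div hyz'.ne' two_ne_zero,
        one_div, Real.log_inv]
      ring
    rw [this]
    refine ENNReal.ofReal_add_le.trans ?_
    gcongr
    rw [← ENNReal.ofReal_one]
    exact ENNReal.ofReal_le_ofReal (by linarith [Real.log_two_lt_d9])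
  have key : ∀ x ∈ Metric.ball c R, ENNReal.ofReal ‖x - y‖ ^ (-(k : ℝ)) *
          ENNReal.ofReal ‖x - z‖ ^ (-((n : ℝ) - k)) ≤ F₁ x + F₂ x + (F₃ y x + F₃ z x) := by
    intro x hx
    have tri : 2 * s ≤ ‖x - y‖ + ‖x - z‖ := by
      have := norm_sub_le (x - z) (x - y)
      rw [show x - z - (x - y) = y - z by abel] at this
      linarith
    by_cases hxy : ‖x - y‖ < s
    · have e : F₁ x = ENNReal.ofReal ‖x - y‖ ^ (-(k : ℝ)) * σ ^ (-((n : ℝ) - k)) :=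
        Set.indicator_of_mem (by simpa [dist_eq_norm] using hxy) _
      refine le_trans ?_ ((le_add_right le_rfl).trans (le_add_right le_rfl) : F₁ x ≤ _)
      rw [e]
      exact mul_le_mul' le_rfl (rpow_neg_anti (ENNReal.ofReal_le_ofReal (by linarith)) (by linarith))
    by_cases hxz : ‖x - z‖ < s
    · have e : F₂ x = ENNReal.ofReal ‖x - z‖ ^ (-((n : ℝ) - k)) * σ ^ (-(k : ℝ)) := by
        rw [← hcast]
        exact Set.indicator_of_mem (by simpa [dist_eq_norm] using hxz) _
      refine le_trans ?_ ((le_add_left le_rfl).trans (le_add_right le_rfl) : F₂ x ≤ _)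
      rw [e, mul_comm]
      exact mul_le_mul' le_rfl (rpow_neg_anti (ENNReal.ofReal_le_ofReal (by linarith)) (by linarith))
    push Not at hxy hxz
    have ey : F₃ y x = ENNReal.ofReal ‖x - y‖ ^ (-(n : ℝ)) :=
      Set.indicator_of_mem (show x ∈ A y from ⟨hxy, diam x hx y hy⟩) _
    have ez : F₃ z x = ENNReal.ofReal ‖x - z‖ ^ (-(n : ℝ)) :=
      Set.indicator_of_mem (show x ∈ A z from ⟨hxz, diam x hx z hz⟩) _
    have split : ∀ w, s ≤ ‖x - w‖ → ENNReal.ofReal ‖x - w‖ ^ (-(n : ℝ)) =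
        ENNReal.ofReal ‖x - w‖ ^ (-(k : ℝ)) * ENNReal.ofReal ‖x - w‖ ^ (-((n : ℝ) - k)) := by
      intro w hw
      rw [← ENNReal.rpow_add _ _ (by simpa using hs0.trans_le hw) ENNReal.ofReal_ne_top]
      congr 1; ring
    refine le_trans ?_ (le_add_left le_rfl)
    rcases le_total ‖x - y‖ ‖x - z‖ with h | h
    · refine le_trans ?_ (le_add_right le_rfl)
      rw [ey, split y hxy]
      exact mul_le_mul' le_rfl (rpow_neg_anti (ENNReal.ofReal_le_ofReal h) (by linarith))
    · refine le_trans ?_ (le_add_left le_rfl)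
      rw [ez, split z hxz]
      exact mul_le_mul' (rpow_neg_anti (ENNReal.ofReal_le_ofReal h) (by linarith)) le_rfl
  have m₁ : Measurable F₁ := Measurable.indicator (by fun_prop) measurableSet_ball
  have m₂ : Measurable F₂ := Measurable.indicator (by fun_prop) measurableSet_ball
  have m₃ : ∀ w, Measurable (F₃ w) := fun w => Measurable.indicator (by fun_prop) (hA w)
  calc _ ≤ ∫⁻ x in Metric.ball c R, (F₁ x + F₂ x + (F₃ y x + F₃ z x)) :=
        setLIntegral_mono' measurableSet_ball key
    _ ≤ ∫⁻ x, (F₁ x + F₂ x + (F₃ y x + F₃ z x)) := setLIntegral_le_lintegral _ _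
    _ = (∫⁻ x, F₁ x) + (∫⁻ x, F₂ x) + ((∫⁻ x, F₃ y x) + ∫⁻ x, F₃ z x) := by
        rw [lintegral_add_left (by fun_prop), lintegral_add_left m₁, lintegral_add_left (m₃ y)]
    _ ≤ C₁ * (1 + G) + C₁ * (1 + G) + (C₂ * (1 + G) + C₂ * (1 + G)) := by
        have : C₁ ≤ C₁ * (1 + G) := le_mul_of_one_le_right zero_le le_self_add
        gcongr
        · exact hF₁.trans this
        · exact hF₂.trans this
        · exact hF₃ y
        · exact hF₃ z
    _ = _ := by ring

/-! ### Logarithmic potential -/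

/-- The shifted logarithmic kernel is nonnegative on the ball, so its lower integral is the Bochner
integral. On the diagonal `Real.log (1 / 0) = 0`. -/
lemma lintegral_log_eq {n : ℕ} (c : Euc n) (R : ℝ) (hR : 0 < R) (ν : Measure (Euc n))
    [IsFiniteMeasure ν] (hν : ∀ᵐ z ∂ν, z ∈ Metric.ball c R) (y : Euc n) (hy : y ∈ Metric.ball c R)
    (hint : Integrable (fun z => Real.log (1 / ‖y - z‖)) ν) :
    ∫⁻ z, ENNReal.ofReal (Real.log (2 * R + 1) + Real.log (1 / ‖y - z‖)) ∂ν =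
      ENNReal.ofReal (Real.log (2 * R + 1) * ν.real Set.univ +
        ∫ z, Real.log (1 / ‖y - z‖) ∂ν) := by
  rw [← ofReal_integral_eq_lintegral_ofReal (f := fun z => Real.log (2 * R + 1) +
      Real.log (1 / ‖y - z‖)) ((integrable_const _).add hint),
    integral_add (integrable_const _) hint, integral_const, smul_eq_mul, mul_comm]
  filter_upwards [hν] with z hz
  rw [Metric.mem_ball] at hy hz
  change 0 ≤ Real.log (2 * R + 1) + Real.log (1 / ‖y - z‖)
  rcases eq_or_ne y z with rfl | h
  · simp only [sub_self, norm_zero, _root_.div_zero, Real.log_zero, add_zero]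
    exact Real.log_nonneg (show (1 : ℝ) ≤ 2 * R + 1 by linarith)
  · have h0 : 0 < ‖y - z‖ := norm_pos_iff.2 (sub_ne_zero.2 h)
    have h1 : ‖y - z‖ ≤ 2 * R + 1 := by
      rw [← dist_eq_norm]; linarith [dist_triangle_right y z c]
    rw [one_div, Real.log_inv]
    linarith [Real.log_le_log h0 h1]

/-- A locally bounded logarithmic potential excludes atoms: at points `x ≠ y` near `y` the potential is
at least `ν {y} * log (1 / |x-y|)` up to a constant. Points `x ≠ y` exist since `0 < n`. -/
lemma measure_singleton_eq_zero {n : ℕ} (hn : 0 < n) (c : Euc n) (R : ℝ) (hR : 0 < R)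
    (ν : Measure (Euc n)) [IsFiniteMeasure ν] (hν : ∀ᵐ z ∂ν, z ∈ Metric.ball c R)
    (hint : ∀ x ∈ Metric.ball c R, Integrable (fun y => Real.log (1 / ‖x - y‖)) ν)
    (hψ : ∀ K, K ⊆ Metric.ball c R → IsCompact K →
      ∃ M : ℝ, ∀ x ∈ K, |∫ y, Real.log (1 / ‖x - y‖) ∂ν| ≤ M)
    (y : Euc n) (hy : y ∈ Metric.ball c R) : ν {y} = 0 := by
  have : Nontrivial (Euc n) := Module.nontrivial_of_finrank_pos (R := ℝ) (by simpa using hn)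
  by_contra hpos
  obtain ⟨δ, hδ, hsub⟩ := Metric.nhds_basis_closedBall.mem_iff.1 (Metric.isOpen_ball.mem_nhds hy)
  obtain ⟨M, hM⟩ := hψ _ hsub (isCompact_closedBall y δ)
  set T : ℝ := Real.log (2 * R + 1) * ν.real Set.univ + M
  have bound : ∀ x ∈ Metric.closedBall y δ, x ≠ y →
      ENNReal.ofReal (Real.log (2 * R + 1) + Real.log (1 / ‖x - y‖)) * ν {y} ≤ ENNReal.ofReal T := by
    intro x hx _
    calc _ = ∫⁻ z in {y}, ENNReal.ofReal (Real.log (2 * R + 1) + Real.log (1 / ‖x - z‖)) ∂ν := by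
          rw [lintegral_singleton]
      _ ≤ _ := setLIntegral_le_lintegral _ _
      _ = _ := lintegral_log_eq c R hR ν hν x (hsub hx) (hint x (hsub hx))
      _ ≤ _ := ENNReal.ofReal_le_ofReal (by
          have := (abs_le.1 (hM x hx)).2
          linarith)
  have lim : Filter.Tendsto (fun x => ENNReal.ofReal (Real.log (2 * R + 1) + Real.log (1 / ‖x - y‖)) * ν {y})
      (nhdsWithin y {y}ᶜ) (nhds (⊤ * ν {y})) := by
    refine ENNReal.Tendsto.mul_const ?_ (Or.inl ENNReal.top_ne_zero)
    refine ENNReal.tendsto_ofReal_nhds_top.2 ?_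
    refine Filter.tendsto_atTop_add_const_left _ _ ?_
    simp only [one_div, Real.log_inv]
    exact Filter.tendsto_neg_atBot_atTop.comp
      (Real.tendsto_log_nhdsGT_zero.comp (tendsto_norm_sub_self_nhdsNE y))
  rw [ENNReal.top_mul hpos] at lim
  have h1 : ∀ᶠ x in nhdsWithin y {y}ᶜ,
      ENNReal.ofReal (Real.log (2 * R + 1) + Real.log (1 / ‖x - y‖)) * ν {y} ≤ ENNReal.ofReal T := by
    filter_upwards [self_mem_nhdsWithin, nhdsWithin_le_nhds (Metric.closedBall_mem_nhds y hδ)]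
      with x hx hx'
    exact bound x hx' hx
  exact absurd (le_of_tendsto lim h1) (by simp)

/-! ### The main estimate -/

/-- Jensen's inequality and Tonelli reduce the power integral of the potential to a double integral of
the two-kernel integral. -/
lemma lintegral_potential_le {n k : ℕ} (hk : 0 < k) (hnk : 2 * k < n) (ν : Measure (Euc n))
    [IsFiniteMeasure ν] (K : Set (Euc n)) :
    ∫⁻ x in K, (∫⁻ y, ENNReal.ofReal ‖x - y‖ ^ (-(k : ℝ)) ∂ν) ^ ((n : ℝ) / k) ≤
      ν Set.univ ^ ((n : ℝ) / k - 2) * ∫⁻ y, ∫⁻ z, (∫⁻ x in K, ENNReal.ofReal ‖x - y‖ ^ (-(k : ℝ)) *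
          ENNReal.ofReal ‖x - z‖ ^ (-((n : ℝ) - k))) ∂ν ∂ν := by
  have hk' : (0 : ℝ) < k := by exact_mod_cast hk
  have hnk' : 2 * (k : ℝ) < n := by exact_mod_cast hnk
  have hp : 2 < (n : ℝ) / k := by rwa [lt_div_iff₀ hk']
  have hpt : ∀ x : Euc n, (∫⁻ y, ENNReal.ofReal ‖x - y‖ ^ (-(k : ℝ)) ∂ν) ^ ((n : ℝ) / k) ≤
      ν Set.univ ^ ((n : ℝ) / k - 2) * ∫⁻ y, ∫⁻ z, ENNReal.ofReal ‖x - y‖ ^ (-(k : ℝ)) *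
          ENNReal.ofReal ‖x - z‖ ^ (-((n : ℝ) - k)) ∂ν ∂ν := by
    intro x
    have hj := jensen ν (fun y => ENNReal.ofReal ‖x - y‖ ^ (-(k : ℝ))) (by fun_prop)
      (q := (n : ℝ) / k - 1) (by linarith)
    have hexp : -(k : ℝ) * ((n : ℝ) / k - 1) = -((n : ℝ) - k) := by field_simp
    simp only [← ENNReal.rpow_mul, hexp] at hj
    rw [show (n : ℝ) / k - 1 - 1 = (n : ℝ) / k - 2 by ring] at hj
    set Φ := ∫⁻ y, ENNReal.ofReal ‖x - y‖ ^ (-(k : ℝ)) ∂ν with hΦ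
    calc Φ ^ ((n : ℝ) / k) = Φ * Φ ^ ((n : ℝ) / k - 1) := by
          conv_rhs => rw [← ENNReal.rpow_one Φ, ← ENNReal.rpow_mul, one_mul]
          rw [← ENNReal.rpow_add_of_nonneg _ _ zero_le_one (by linarith)]
          congr 1; ring
      _ ≤ Φ * (ν Set.univ ^ ((n : ℝ) / k - 2) *
            ∫⁻ z, ENNReal.ofReal ‖x - z‖ ^ (-((n : ℝ) - k)) ∂ν) := by gcongr
      _ = _ := by
          rw [mul_left_comm, hΦ, ← lintegral_mul_const _ (by fun_prop)]
          congr 2 with y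
          rw [lintegral_const_mul _ (by fun_prop)]
  calc _ ≤ ∫⁻ x in K, ν Set.univ ^ ((n : ℝ) / k - 2) * ∫⁻ y, ∫⁻ z,
          ENNReal.ofReal ‖x - y‖ ^ (-(k : ℝ)) *
          ENNReal.ofReal ‖x - z‖ ^ (-((n : ℝ) - k)) ∂ν ∂ν := lintegral_mono hpt
    _ = ν Set.univ ^ ((n : ℝ) / k - 2) * ∫⁻ x in K, ∫⁻ y, ∫⁻ z,
          ENNReal.ofReal ‖x - y‖ ^ (-(k : ℝ)) *
          ENNReal.ofReal ‖x - z‖ ^ (-((n : ℝ) - k)) ∂ν ∂ν := by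
        rw [lintegral_const_mul' _ _ (ENNReal.rpow_ne_top_of_nonneg (by linarith)
          (measure_ne_top _ _))]
    _ = _ := by
        congr 1
        rw [lintegral_lintegral_swap]
        · congr 1 with y
          rw [lintegral_lintegral_swap]
          refine Measurable.aemeasurable ?_
          unfold Function.uncurry
          fun_prop
        · refine Measurable.aemeasurable ?_
          refine Measurable.lintegral_prod_right' (ν := ν)
            (f := fun p : (Euc n × Euc n) × Euc n => ENNReal.ofReal ‖p.1.1 - p.1.2‖ ^ (-(k : ℝ)) *
              ENNReal.ofReal ‖p.1.1 - p.2‖ ^ (-((n : ℝ) - k))) ?_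
          fun_prop

/-- Lemma 1 (ii). If `n > 2k` and the logarithmic potential
`ψ(x) = ∫_B log(1/|x-y|) dμ(y)` is locally bounded on `B`, then
`φ_{-k} ∈ L^{n/k}_loc(B)`. -/
theorem stmt8 {n k : ℕ} (hnk : 2 * k < n)
    (c : Euc n) (R : ℝ) (hR : 0 < R) (B : Set (Euc n)) (hB : B = Metric.ball c R)
    (μ : Measure (Euc n)) (hμ : μ B < ⊤)
    (ψ : Euc n → ℝ) (hψdef : ∀ x, ψ x = ∫ y in B, Real.log (1 / ‖x - y‖) ∂μ)
    (hψint : ∀ x ∈ B, Integrable (fun y => Real.log (1 / ‖x - y‖)) (μ.restrict B))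
    (hψ : ∀ K, K ⊆ B → IsCompact K → ∃ M : ℝ, ∀ x ∈ K, |ψ x| ≤ M) :
    ∀ K, K ⊆ B → IsCompact K →
      ∫⁻ x in K, phiK B μ (-(k : ℝ)) x ^ ((n : ℝ) / k) < ⊤ := by
  intro K hKB hK
  rcases Nat.eq_zero_or_pos k with rfl | hk
  · simpa using hK.measure_lt_top
  subst hB
  set B := Metric.ball c R with hBdef
  have hk' : (0 : ℝ) < k := by exact_mod_cast hk
  have hnk' : 2 * (k : ℝ) < n := by exact_mod_cast hnk
  have hp : 2 < (n : ℝ) / k := by rwa [lt_div_iff₀ hk']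
  set p := (n : ℝ) / k with hpdef
  set ν := μ.restrict B with hν
  have : IsFiniteMeasure ν := ⟨by simpa [hν] using hμ⟩
  have hνB : ∀ᵐ z ∂ν, z ∈ B := ae_restrict_mem measurableSet_ball
  obtain ⟨δ, hδ, hδB⟩ := hK.exists_cthickening_subset_open Metric.isOpen_ball hKB
  set K' := Metric.cthickening δ K with hK'
  have hK'c : IsCompact K' := hK.cthickening
  have hK'm : MeasurableSet K' := hK'c.isClosed.measurableSet
  obtain ⟨M, hM⟩ := hψ K' hδB hK'c
  set ν' := ν.restrict K' with hν'
  have hν'le : ν' ≤ ν := Measure.restrict_le_self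
  have atom : ∀ y ∈ B, ν {y} = 0 :=
    measure_singleton_eq_zero (by omega) c R hR ν hνB hψint
      (by simpa only [hψdef] using hψ)
  obtain ⟨C, hC, hJ⟩ := lintegral_two_kernels hk (by omega : k < n) c R
  set T := ENNReal.ofReal (Real.log (2 * R + 1) * ν.real Set.univ + M) with hT
  -- For fixed `y ∈ K'` the two-kernel integral, integrated in `z`, is bounded by `ψ y ≤ M`.
  have hinner : ∀ y ∈ K', ∫⁻ z, (∫⁻ x in K, ENNReal.ofReal ‖x - y‖ ^ (-(k : ℝ)) *
          ENNReal.ofReal ‖x - z‖ ^ (-((n : ℝ) - k))) ∂ν' ≤ C * (ν Set.univ + T) := by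
    intro y hy
    have hyB : y ∈ B := hδB hy
    calc _ ≤ ∫⁻ z, (∫⁻ x in B, ENNReal.ofReal ‖x - y‖ ^ (-(k : ℝ)) *
          ENNReal.ofReal ‖x - z‖ ^ (-((n : ℝ) - k))) ∂ν :=
          lintegral_mono' hν'le fun z => lintegral_mono_set hKB
      _ ≤ ∫⁻ z, C * (1 + ENNReal.ofReal (Real.log (2 * R + 1) + Real.log (1 / ‖y - z‖))) ∂ν := by
          refine lintegral_mono_ae ?_
          filter_upwards [hνB, compl_mem_ae_iff.2 (atom y hyB)] with z hz hzy
          exact hJ y hyB z hz (fun h => hzy h.symm)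
      _ = C * (ν Set.univ + ENNReal.ofReal (Real.log (2 * R + 1) * ν.real Set.univ + ψ y)) := by
          rw [lintegral_const_mul' _ _ hC, lintegral_add_left measurable_const,
            lintegral_log_eq c R hR ν hνB y hyB (hψint y hyB), hψdef y]
          simp
      _ ≤ _ := by
          rw [hT]
          gcongr
          exact (abs_le.1 (hM y hy)).2
  have hlocal : ∫⁻ x in K, (∫⁻ y, ENNReal.ofReal ‖x - y‖ ^ (-(k : ℝ)) ∂ν') ^ p < ⊤ := by
    refine (lintegral_potential_le hk hnk ν' K).trans_lt ?_
    refine ENNReal.mul_lt_top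
      (ENNReal.rpow_lt_top_of_nonneg (by linarith) (measure_ne_top _ _)) ?_
    calc _ ≤ ∫⁻ y, C * (ν Set.univ + T) ∂ν' := by
          refine lintegral_mono_ae ?_
          filter_upwards [ae_restrict_mem hK'm] with y hy using hinner y hy
      _ = C * (ν Set.univ + T) * ν' Set.univ := lintegral_const _
      _ < ⊤ := by finiteness
  -- `D` bounds on `K` the potential of the mass lying outside `K'`.
  set D := ENNReal.ofReal δ ^ (-(k : ℝ)) * ν Set.univ with hD
  have hDt : D ≠ ⊤ := by
    refine ENNReal.mul_ne_top ?_ (measure_ne_top _ _)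
    rw [ENNReal.ofReal_rpow_of_pos hδ]
    exact ENNReal.ofReal_ne_top
  have hpt : ∀ x ∈ K, phiK B μ (-(k : ℝ)) x ^ p ≤ 2 ^ (p - 1) *
      ((∫⁻ y, ENNReal.ofReal ‖x - y‖ ^ (-(k : ℝ)) ∂ν') ^ p + D ^ p) := by
    intro x hx
    refine le_trans ?_ (ENNReal.rpow_add_le_mul_rpow_add_rpow _ _ (by linarith))
    gcongr
    rw [phiK, ← lintegral_add_compl _ hK'm]
    gcongr
    calc _ ≤ ∫⁻ y in K'ᶜ, ENNReal.ofReal δ ^ (-(k : ℝ)) ∂ν := by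
          refine setLIntegral_mono' hK'm.compl fun y hy => ?_
          refine rpow_neg_anti (ENNReal.ofReal_le_ofReal ?_) hk'.le
          by_contra! hlt
          refine hy (Metric.mem_cthickening_of_dist_le y x δ K hx ?_)
          rw [dist_comm, dist_eq_norm]
          exact hlt.le
      _ ≤ D := by
          rw [setLIntegral_const, hD]
          gcongr
          exact Set.subset_univ _
  calc _ ≤ ∫⁻ x in K, 2 ^ (p - 1) *
      ((∫⁻ y, ENNReal.ofReal ‖x - y‖ ^ (-(k : ℝ)) ∂ν') ^ p + D ^ p) :=
        setLIntegral_mono' hK.measurableSet hpt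
    _ = 2 ^ (p - 1) * ((∫⁻ x in K, (∫⁻ y, ENNReal.ofReal ‖x - y‖ ^ (-(k : ℝ)) ∂ν') ^ p) +
          D ^ p * volume K) := by
        rw [lintegral_const_mul' _ _ (ENNReal.rpow_ne_top_of_nonneg (by linarith) (by simp)),
          lintegral_add_right _ measurable_const, setLIntegral_const]
    _ < ⊤ := by
        refine ENNReal.mul_lt_top (ENNReal.rpow_lt_top_of_nonneg (by linarith) (by simp)) ?_
        refine ENNReal.add_lt_top.2 ⟨hlocal, ENNReal.mul_lt_top ?_ hK.measure_lt_top⟩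
        exact ENNReal.rpow_lt_top_of_nonneg (by linarith) hDt
end
end

section
/- Let n > 2m with m ≥ 1, let B and B' be open balls in ℝ^n with the closure of B contained in B', and let G : B' × B' → [0,∞] be measurable and satisfy c|x−y|^{2−n} ≤ G(x,y) ≤ C|x−y|^{2−n} for all x,y ∈ B' with constants 0 < c ≤ C. Define G_1 = G and inductively G_k(x,y) = ∫_{B'} G(x,z) G_{k−1}(z,y) dz for k = 2, …, m. Then there exist constants 0 < c_m ≤ C_m such that c_m |x−y|^{2m−n} ≤ G_m(x,y) ≤ C_m |x−y|^{2m−n} for all x, y ∈ B. -/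
/-!
The bounds in fact hold on all of `B' × B'`, and are proved there by induction on the number of
factors; the two sides of the induction step are independent estimates for Riesz kernels.

* Upper bound (`riesz_upper`): for `α, β > 0` with `α + β < n`,
  `∫_{ℝⁿ} |x - z|^(α-n) |z - y|^(β-n) dz ≤ K |x - y|^(α+β-n)`. Translation and dilation reduce this
  to `x = 0`, `|y| = 1`, where the integrand is dominated by the sum of a function of `z` and a
  translate by `y` of such a function, each with a locally integrable singularity at the origin
  and decay `|z|^(α+β-2n)` at infinity.
* Lower bound (`riesz_lower`): a ball `B'` of radius `R'` satisfies a uniform interior condition: if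
  `|x - y| ≤ s ≤ 2R'`, then `B'` contains a ball of radius `s/4` all of whose points lie within
  `2s` of both `x` and `y`. Integrating over that ball gives the bound `κ s^(α+β-n)`. Off the
  diagonal take `s = |x - y|`; on the diagonal let `s → 0`, which shows that the integral is
  infinite, in agreement with `0 ^ (α+β-n) = ∞`.
-/

open MeasureTheory ENNReal
open scoped ENNReal NNReal

noncomputable section

/-- The iterated kernels: `iterK B' G k` is `G_{k+1}`, where `G_1 = G` and
`G_{j+1}(x,y) = ∫_{B'} G(x,z) G_j(z,y) dz`. -/
def iterK {n : ℕ} (B' : Set (Euc n)) (G : Euc n → Euc n → ℝ≥0∞) :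
    ℕ → Euc n → Euc n → ℝ≥0∞
  | 0 => G
  | j + 1 => fun x y => ∫⁻ z in B', G x z * iterK B' G j z y

lemma ennreal_rpow_anti {x y : ℝ≥0∞} {p : ℝ} (h : x ≤ y) (hp : p ≤ 0) : y ^ p ≤ x ^ p := by
  have h1 := ENNReal.rpow_le_rpow h (neg_nonneg.2 hp)
  rw [ENNReal.rpow_neg, ENNReal.rpow_neg] at h1
  exact ENNReal.inv_le_inv.1 h1

/-! ### Upper bound -/

/-- Radial majorant: singularity `|z|^p` in the unit ball plus decay `|z|^q` at infinity, with the
constants needed for `riesz_pointwise`. -/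
def rieszMajorant (n : ℕ) (p q : ℝ) (z : Euc n) : ℝ≥0∞ :=
  2 ^ (n : ℝ) * (Metric.ball (0 : Euc n) 1).indicator (fun z => ‖z‖ₑ ^ p) z +
    3 ^ (-q) * ENNReal.ofReal ((1 + ‖z‖) ^ q)

lemma measurable_rieszMajorant (n : ℕ) (p q : ℝ) : Measurable (rieszMajorant n p q) := by
  unfold rieszMajorant
  have h1 : Measurable fun z : Euc n => ‖z‖ₑ ^ p := by fun_prop
  have h2 := h1.indicator (measurableSet_ball (x := (0 : Euc n)) (ε := 1))
  have h3 : Measurable fun z : Euc n => ENNReal.ofReal ((1 + ‖z‖) ^ q) := by fun_prop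
  exact (h2.const_mul _).add (h3.const_mul _)

lemma lintegral_rieszMajorant_ne_top {n : ℕ} (hn : 1 ≤ n) {p q : ℝ} (hp : -(n : ℝ) < p)
    (hq : q < -(n : ℝ)) : ∫⁻ z, rieszMajorant n p q z ≠ ∞ := by
  have h1 : Measurable fun z : Euc n => ‖z‖ₑ ^ p := by fun_prop
  have h2 := h1.indicator (measurableSet_ball (x := (0 : Euc n)) (ε := 1))
  have h3 : Measurable fun z : Euc n => ENNReal.ofReal ((1 + ‖z‖) ^ q) := by fun_prop
  unfold rieszMajorant
  rw [lintegral_add_left (h2.const_mul _), lintegral_const_mul _ h2, lintegral_const_mul _ h3,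
    lintegral_indicator measurableSet_ball]
  have : Nontrivial (Euc n) := by
    apply Module.nontrivial_of_finrank_pos (R := ℝ)
    simp; omega
  have hfin : ∫⁻ z in Metric.ball (0 : Euc n) 1, ‖z‖ₑ ^ p ≠ ∞ := by
    have hi : IntegrableOn (fun z : Euc n => ‖z‖ ^ p) (Metric.ball 0 1) volume := by
      refine integrableOn_ball_of_norm_le_rpow (C := 1) (α := -p) (by simpa using hn)
        (by simp; linarith) ?_ (Measurable.aestronglyMeasurable (by fun_prop))
      refine Filter.Eventually.of_forall fun x => ?_
      simp [abs_of_nonneg (Real.rpow_nonneg (norm_nonneg x) p)]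
    have hlt : ∫⁻ z in Metric.ball (0 : Euc n) 1, ‖(‖z‖ ^ p : ℝ)‖ₑ < ∞ := hi.2
    refine ne_of_lt (lt_of_eq_of_lt ?_ hlt)
    -- the point `0`, where `0 ^ p` may be `∞` in `ℝ≥0∞`, is a null set
    have hae : ∀ᵐ z : Euc n ∂(volume.restrict (Metric.ball 0 1)), z ≠ 0 :=
      ae_restrict_of_ae (by simp [ae_iff])
    refine lintegral_congr_ae ?_
    filter_upwards [hae] with z hz
    rw [Real.enorm_eq_ofReal (Real.rpow_nonneg (norm_nonneg z) p),
      ← ENNReal.ofReal_rpow_of_pos (norm_pos_iff.2 hz), ofReal_norm]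
  have hfin2 : ∫⁻ z : Euc n, ENNReal.ofReal ((1 + ‖z‖) ^ q) ≠ ∞ := by
    have := finite_integral_one_add_norm (E := Euc n) (μ := volume) (r := -q)
      (by simp; linarith)
    simpa using this.ne
  refine ENNReal.add_ne_top.2 ⟨ENNReal.mul_ne_top (by finiteness) hfin, ENNReal.mul_ne_top ?_ hfin2⟩
  exact ENNReal.rpow_ne_top_of_ne_zero (by simp) (by simp)

lemma le_rieszMajorant_of_lt {n : ℕ} {p q : ℝ} {z : Euc n} (hz : ‖z‖ < 1 / 2) {t : ℝ≥0∞}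
    {r : ℝ} (hr : r ≤ 0) (hrn : -(n : ℝ) ≤ r) (ht : 2⁻¹ ≤ t) :
    ‖z‖ₑ ^ p * t ^ r ≤ rieszMajorant n p q z := by
  have h1 : t ^ r ≤ 2 ^ (n : ℝ) := by
    calc t ^ r ≤ (2⁻¹ : ℝ≥0∞) ^ r := ennreal_rpow_anti ht hr
      _ = 2 ^ (-r) := by rw [ENNReal.inv_rpow, ENNReal.rpow_neg]
      _ ≤ 2 ^ (n : ℝ) := ENNReal.rpow_le_rpow_of_exponent_le (by norm_num) (by linarith)
  unfold rieszMajorant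
  rw [Set.indicator_of_mem (by simp; linarith)]
  calc ‖z‖ₑ ^ p * t ^ r ≤ ‖z‖ₑ ^ p * 2 ^ (n : ℝ) := by gcongr
    _ = 2 ^ (n : ℝ) * ‖z‖ₑ ^ p := mul_comm _ _
    _ ≤ _ := le_self_add

lemma le_rieszMajorant_of_ge {n : ℕ} {p q : ℝ} {z : Euc n} (hz : 1 / 2 ≤ ‖z‖) (hq : q ≤ 0) :
    ‖z‖ₑ ^ q ≤ rieszMajorant n p q z := by
  have h0 : 0 < ‖z‖ := by linarith
  have h1 : ‖z‖ₑ ^ q ≤ 3 ^ (-q) * ENNReal.ofReal ((1 + ‖z‖) ^ q) := by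
    rw [← ofReal_norm, ENNReal.ofReal_rpow_of_pos h0,
      show (3 : ℝ≥0∞) = ENNReal.ofReal 3 by simp, ENNReal.ofReal_rpow_of_pos (by norm_num),
      ← ENNReal.ofReal_mul (by positivity)]
    apply ENNReal.ofReal_le_ofReal
    have h2 : (3 * ‖z‖) ^ q ≤ (1 + ‖z‖) ^ q :=
      Real.rpow_le_rpow_of_nonpos (by positivity) (by linarith) hq
    rw [Real.mul_rpow (by norm_num) h0.le] at h2
    calc ‖z‖ ^ q = 3 ^ (-q) * (3 ^ q * ‖z‖ ^ q) := by
          rw [← mul_assoc, ← Real.rpow_add (by norm_num)]; simp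
      _ ≤ _ := by gcongr
  exact h1.trans le_add_self

/-- The integrand of the normalised composition is controlled by the majorants centred at its two
singularities `0` and `e`: near one singularity the other factor is bounded, and away from both
the product is at most the larger of the two single powers. -/
lemma riesz_pointwise {n : ℕ} {p r : ℝ} (hp : p ≤ 0) (hr : r ≤ 0) (hpn : -(n : ℝ) ≤ p)
    (hrn : -(n : ℝ) ≤ r) {e : Euc n} (he : ‖e‖ = 1) (z : Euc n) :
    ‖z‖ₑ ^ p * ‖z - e‖ₑ ^ r ≤ rieszMajorant n p (p + r) z + rieszMajorant n r (p + r) (z - e) := by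
  have half : ∀ w : Euc n, 1 / 2 ≤ ‖w‖ → (2⁻¹ : ℝ≥0∞) ≤ ‖w‖ₑ := by
    intro w hw
    rw [← ofReal_norm, show (2⁻¹ : ℝ≥0∞) = ENNReal.ofReal (1 / 2) by
      rw [one_div, ENNReal.ofReal_inv_of_pos (by norm_num)]; simp]
    exact ENNReal.ofReal_le_ofReal hw
  have htri : 1 ≤ ‖z‖ + ‖z - e‖ := by
    have := norm_sub_le z (z - e)
    simpa [he] using this
  rcases lt_or_ge ‖z‖ (1 / 2) with h1 | h1
  · exact (le_rieszMajorant_of_lt h1 hr hrn (half _ (by linarith))).trans le_self_add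
  rcases lt_or_ge ‖z - e‖ (1 / 2) with h2 | h2
  · rw [mul_comm]
    exact (le_rieszMajorant_of_lt h2 hp hpn (half _ h1)).trans le_add_self
  have key : ∀ w : Euc n, 1 / 2 ≤ ‖w‖ → ‖w‖ₑ ^ p * ‖w‖ₑ ^ r = ‖w‖ₑ ^ (p + r) := by
    intro w hw
    rw [ENNReal.rpow_add]
    · simp only [ne_eq, enorm_eq_zero]
      rintro rfl
      norm_num at hw
    · simp
  rcases le_total ‖z‖ₑ ‖z - e‖ₑ with h | h
  · refine le_trans ?_ ((le_rieszMajorant_of_ge h1 (by linarith)).trans le_self_add)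
    rw [← key z h1]
    exact mul_le_mul' le_rfl (ennreal_rpow_anti h hr)
  · refine le_trans ?_ ((le_rieszMajorant_of_ge h2 (by linarith)).trans le_add_self)
    rw [← key _ h2]
    exact mul_le_mul' (ennreal_rpow_anti h hp) le_rfl

lemma lintegral_dilate {n : ℕ} {s : ℝ} (hs : 0 < s) {f : Euc n → ℝ≥0∞} (hf : Measurable f) :
    ∫⁻ z, f z = ENNReal.ofReal s ^ (n : ℝ) * ∫⁻ z, f (s • z) := by
  have h := Measure.map_addHaar_smul (volume : Measure (Euc n)) hs.ne'
  have h2 : ∫⁻ z, f (s • z) = ENNReal.ofReal |(s ^ n)⁻¹| * ∫⁻ z, f z := by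
    rw [← lintegral_map hf (measurable_const_smul s), h, lintegral_smul_measure]
    simp
  rw [h2, ← mul_assoc, abs_of_pos (by positivity), ENNReal.ofReal_rpow_of_pos hs,
    ← ENNReal.ofReal_mul (by positivity), Real.rpow_natCast, mul_inv_cancel₀ (by positivity)]
  simp

lemma riesz_upper {n : ℕ} (hn : 1 ≤ n) {α β : ℝ} (hα : 0 < α) (hβ : 0 < β) (hαβ : α + β < n) :
    ∃ K : ℝ≥0∞, K ≠ ∞ ∧ ∀ x y : Euc n,
      ∫⁻ z, ‖x - z‖ₑ ^ (α - n) * ‖z - y‖ₑ ^ (β - n) ≤ K * ‖x - y‖ₑ ^ (α + β - n) := by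
  set p := α - n with hp
  set r := β - n with hr
  refine ⟨(∫⁻ z, rieszMajorant n p (p + r) z) + (∫⁻ z, rieszMajorant n r (p + r) z) + 1, ?_, ?_⟩
  · have h1 := lintegral_rieszMajorant_ne_top hn (p := p) (q := p + r) (by linarith) (by linarith)
    have h2 := lintegral_rieszMajorant_ne_top hn (p := r) (q := p + r) (by linarith) (by linarith)
    finiteness
  intro x y
  rcases eq_or_ne x y with rfl | hxy
  · rw [sub_self, enorm_zero, ENNReal.zero_rpow_of_neg (by linarith), ENNReal.mul_top (by simp)]
    exact le_top
  set s := ‖x - y‖ with hs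
  have hs0 : 0 < s := norm_pos_iff.2 (sub_ne_zero.2 hxy)
  set e : Euc n := s⁻¹ • (y - x) with he
  have hse : s • e = y - x := by rw [he, smul_smul, mul_inv_cancel₀ hs0.ne', one_smul]
  have he1 : ‖e‖ = 1 := by
    rw [he, norm_smul, norm_sub_rev, ← hs, norm_inv, Real.norm_of_nonneg hs0.le,
      inv_mul_cancel₀ hs0.ne']
  have hS : ‖x - y‖ₑ = ENNReal.ofReal s := (ofReal_norm _).symm
  have hS0 : ENNReal.ofReal s ≠ 0 := by simpa using hs0
  have hSt : ENNReal.ofReal s ≠ ∞ := by simp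
  have hmeas : Measurable fun z : Euc n => ‖z‖ₑ ^ p * ‖z - (y - x)‖ₑ ^ r := by fun_prop
  have hscale : ∀ z : Euc n, ‖s • z‖ₑ ^ p * ‖s • z - (y - x)‖ₑ ^ r =
      ENNReal.ofReal s ^ (p + r) * (‖z‖ₑ ^ p * ‖z - e‖ₑ ^ r) := by
    intro z
    rw [← hse, ← smul_sub, enorm_smul, enorm_smul, Real.enorm_eq_ofReal hs0.le,
      ENNReal.mul_rpow_of_ne_top hSt (by simp), ENNReal.mul_rpow_of_ne_top hSt (by simp),
      ENNReal.rpow_add _ _ hS0 hSt]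
    ring
  have hmeas2 : Measurable fun z : Euc n => ‖z‖ₑ ^ p * ‖z - e‖ₑ ^ r := by fun_prop
  calc ∫⁻ z, ‖x - z‖ₑ ^ p * ‖z - y‖ₑ ^ r
      = ∫⁻ z, ‖x - (x + z)‖ₑ ^ p * ‖(x + z) - y‖ₑ ^ r :=
        (lintegral_add_left_eq_self (fun z => ‖x - z‖ₑ ^ p * ‖z - y‖ₑ ^ r) x).symm
    _ = ∫⁻ z, ‖z‖ₑ ^ p * ‖z - (y - x)‖ₑ ^ r := by
        refine lintegral_congr fun z => ?_
        rw [show x - (x + z) = -z by abel, enorm_neg, show x + z - y = z - (y - x) by abel]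
    _ = ENNReal.ofReal s ^ (n : ℝ) *
          (ENNReal.ofReal s ^ (p + r) * ∫⁻ z, ‖z‖ₑ ^ p * ‖z - e‖ₑ ^ r) := by
        rw [lintegral_dilate hs0 hmeas, ← lintegral_const_mul _ hmeas2]
        simp_rw [hscale]
    _ = (∫⁻ z, ‖z‖ₑ ^ p * ‖z - e‖ₑ ^ r) * ENNReal.ofReal s ^ (α + β - n) := by
        rw [← mul_assoc, ← ENNReal.rpow_add _ _ hS0 hSt, mul_comm]
        congr 2
        rw [hp, hr]; ring
    _ ≤ _ := by
        rw [hS]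
        gcongr
        refine le_trans ?_ le_self_add
        refine (lintegral_mono fun z => riesz_pointwise (p := p) (r := r) (by linarith)
          (by linarith) (by linarith) (by linarith) he1 z).trans ?_
        rw [lintegral_add_left (measurable_rieszMajorant n p (p + r)),
          lintegral_sub_right_eq_self (fun z => rieszMajorant n r (p + r) z) e]

/-! ### Lower bound -/

/-- Uniform interior condition of a ball; the witness is `x` moved towards the centre. -/
lemma exists_interior_ball {n : ℕ} {c x y : Euc n} {R s : ℝ} (hR : 0 < R)
    (hx : x ∈ Metric.ball c R) (hs : 0 < s) (hsR : s ≤ 2 * R) (hxy : ‖x - y‖ ≤ s) :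
    ∃ w : Euc n, Metric.ball w (s / 4) ⊆ Metric.ball c R ∧
      ∀ z ∈ Metric.ball w (s / 4), ‖x - z‖ ≤ 2 * s ∧ ‖z - y‖ ≤ 2 * s := by
  rw [mem_ball_iff_norm] at hx
  set t := s / (4 * R) with ht
  have ht0 : 0 < t := by positivity
  have ht1 : t ≤ 1 := by rw [ht, div_le_one (by positivity)]; linarith
  have htR : t * R = s / 4 := by rw [ht]; field_simp
  set w := x - t • (x - c) with hw
  have hwx : ‖w - x‖ ≤ s / 4 := by
    rw [hw, sub_sub_cancel_left, norm_neg, norm_smul, Real.norm_of_nonneg ht0.le, ← htR]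
    gcongr
  have hwc : ‖w - c‖ ≤ (1 - t) * R := by
    rw [show w - c = (1 - t) • (x - c) by rw [hw]; module, norm_smul,
      Real.norm_of_nonneg (by linarith)]
    gcongr
  refine ⟨w, ?_, fun z hz => ?_⟩
  · intro z hz
    rw [mem_ball_iff_norm] at hz ⊢
    have := norm_sub_le_norm_sub_add_norm_sub z w c
    linarith
  · rw [mem_ball_iff_norm] at hz
    have h1 : ‖z - x‖ ≤ s / 2 := by
      have := norm_sub_le_norm_sub_add_norm_sub z w x
      linarith
    have h2 := norm_sub_le_norm_sub_add_norm_sub z x y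
    rw [norm_sub_rev x z]
    constructor <;> linarith

lemma riesz_lower {n : ℕ} (hn : 1 ≤ n) {α β : ℝ} (hα : 0 < α) (hβ : 0 < β) (hαβ : α + β < n)
    (c : Euc n) {R : ℝ} (hR : 0 < R) :
    ∃ κ : ℝ≥0∞, κ ≠ 0 ∧ κ ≠ ∞ ∧ ∀ x ∈ Metric.ball c R, ∀ y ∈ Metric.ball c R,
      κ * ‖x - y‖ₑ ^ (α + β - n) ≤
        ∫⁻ z in Metric.ball c R, ‖x - z‖ₑ ^ (α - n) * ‖z - y‖ₑ ^ (β - n) := by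
  have : Nontrivial (Euc n) := by
    apply Module.nontrivial_of_finrank_pos (R := ℝ)
    simp; omega
  set p := α - n with hp
  set r := β - n with hr
  set V : ℝ≥0∞ := volume (Metric.ball (0 : Euc n) 1) with hV
  have hV0 : V ≠ 0 := (Metric.measure_ball_pos volume _ one_pos).ne'
  have hVt : V ≠ ∞ := measure_ball_lt_top.ne
  set κ : ℝ≥0∞ := 2 ^ p * 2 ^ r * (ENNReal.ofReal (1 / 4)) ^ (n : ℝ) * V with hκ
  have h20 : ∀ q : ℝ, (2 : ℝ≥0∞) ^ q ≠ 0 := fun q =>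
    (ENNReal.rpow_pos (by norm_num) (by norm_num)).ne'
  have h2t : ∀ q : ℝ, (2 : ℝ≥0∞) ^ q ≠ ∞ := fun q =>
    ENNReal.rpow_ne_top_of_ne_zero (by norm_num) (by norm_num)
  have h40 : (ENNReal.ofReal (1 / 4)) ^ (n : ℝ) ≠ 0 :=
    (ENNReal.rpow_pos (by simp) (by simp)).ne'
  have h4t : (ENNReal.ofReal (1 / 4)) ^ (n : ℝ) ≠ ∞ :=
    ENNReal.rpow_ne_top_of_ne_zero (by simp) (by simp)
  have hκ0 : κ ≠ 0 := mul_ne_zero (mul_ne_zero (mul_ne_zero (h20 _) (h20 _)) h40) hV0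
  have hκt : κ ≠ ∞ :=
    ENNReal.mul_ne_top (ENNReal.mul_ne_top (ENNReal.mul_ne_top (h2t _) (h2t _)) h4t) hVt
  refine ⟨κ, hκ0, hκt, fun x hx y hy => ?_⟩
  have key : ∀ s : ℝ, 0 < s → s ≤ 2 * R → ‖x - y‖ ≤ s →
      κ * ENNReal.ofReal s ^ (α + β - n) ≤
        ∫⁻ z in Metric.ball c R, ‖x - z‖ₑ ^ p * ‖z - y‖ₑ ^ r := by
    intro s hs hsR hxy
    obtain ⟨w, hw1, hw2⟩ := exists_interior_ball hR hx hs hsR hxy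
    have hS0 : ENNReal.ofReal s ≠ 0 := by simpa using hs
    have hSt : ENNReal.ofReal s ≠ ∞ := by simp
    have hvol : volume (Metric.ball w (s / 4)) =
        ENNReal.ofReal s ^ (n : ℝ) * ENNReal.ofReal (1 / 4) ^ (n : ℝ) * V := by
      rw [Measure.addHaar_ball_of_pos _ _ (by positivity),
        ← ENNReal.mul_rpow_of_ne_top hSt (by simp), ← ENNReal.ofReal_mul hs.le,
        ENNReal.ofReal_rpow_of_pos (by positivity), Real.rpow_natCast]
      simp [div_eq_mul_inv, hV]
    have henorm : ∀ v : Euc n, ‖v‖ ≤ 2 * s → ‖v‖ₑ ≤ 2 * ENNReal.ofReal s := by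
      intro v hv
      rw [← ofReal_norm]
      refine (ENNReal.ofReal_le_ofReal hv).trans_eq ?_
      rw [ENNReal.ofReal_mul (by norm_num), ENNReal.ofReal_ofNat]
    calc κ * ENNReal.ofReal s ^ (α + β - n)
        = ((2 * ENNReal.ofReal s) ^ p * (2 * ENNReal.ofReal s) ^ r) *
            volume (Metric.ball w (s / 4)) := by
          rw [hvol, ENNReal.mul_rpow_of_ne_top (by simp) hSt,
            ENNReal.mul_rpow_of_ne_top (by simp) hSt,
            show α + β - n = p + r + n by rw [hp, hr]; ring,
            ENNReal.rpow_add _ _ hS0 hSt, ENNReal.rpow_add _ _ hS0 hSt, hκ]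
          ring
      _ = ∫⁻ z in Metric.ball w (s / 4), (2 * ENNReal.ofReal s) ^ p *
            (2 * ENNReal.ofReal s) ^ r := by rw [setLIntegral_const]
      _ ≤ ∫⁻ z in Metric.ball w (s / 4), ‖x - z‖ₑ ^ p * ‖z - y‖ₑ ^ r := by
          refine setLIntegral_mono' measurableSet_ball fun z hz => ?_
          obtain ⟨h1, h2⟩ := hw2 z hz
          exact mul_le_mul' (ennreal_rpow_anti (henorm _ h1) (by linarith))
            (ennreal_rpow_anti (henorm _ h2) (by linarith))
      _ ≤ _ := lintegral_mono_set hw1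
  rcases eq_or_ne x y with rfl | hxy
  · have hcont : Filter.Tendsto (fun s : ℝ => κ * ENNReal.ofReal s ^ (α + β - n))
        (nhdsWithin 0 (Set.Ioi 0)) (nhds (κ * ENNReal.ofReal 0 ^ (α + β - n))) := by
      have : Continuous fun s : ℝ => κ * ENNReal.ofReal s ^ (α + β - n) :=
        (ENNReal.continuous_const_mul hκt).comp
          (ENNReal.continuous_rpow_const.comp ENNReal.continuous_ofReal)
      exact this.continuousAt.tendsto.mono_left nhdsWithin_le_nhds
    rw [sub_self, enorm_zero, ← ENNReal.ofReal_zero]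
    refine le_of_tendsto hcont ?_
    filter_upwards [Ioo_mem_nhdsGT (show (0 : ℝ) < 2 * R by positivity)] with s hs
    exact key s hs.1 hs.2.le (by simpa using hs.1.le)
  · rw [← ofReal_norm]
    refine key _ (norm_pos_iff.2 (sub_ne_zero.2 hxy)) ?_ le_rfl
    rw [mem_ball_iff_norm] at hx hy
    have := norm_sub_le_norm_sub_add_norm_sub x c y
    rw [norm_sub_rev c y] at this
    linarith

/-! ### Iteration -/

lemma iterK_bounds {n : ℕ} (c₀ : Euc n) {R : ℝ} (hR : 0 < R) (G : Euc n → Euc n → ℝ≥0∞)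
    {c C : ℝ≥0∞} (hc0 : c ≠ 0) (hct : c ≠ ∞) (hCt : C ≠ ∞)
    (hlow : ∀ x ∈ Metric.ball c₀ R, ∀ y ∈ Metric.ball c₀ R,
      c * ‖x - y‖ₑ ^ ((2 : ℝ) - n) ≤ G x y)
    (hupp : ∀ x ∈ Metric.ball c₀ R, ∀ y ∈ Metric.ball c₀ R,
      G x y ≤ C * ‖x - y‖ₑ ^ ((2 : ℝ) - n)) (k : ℕ) (hk : 2 * (k + 1) < n) :
    ∃ a A : ℝ≥0∞, a ≠ 0 ∧ a ≠ ∞ ∧ A ≠ ∞ ∧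
      ∀ x ∈ Metric.ball c₀ R, ∀ y ∈ Metric.ball c₀ R,
        a * ‖x - y‖ₑ ^ (2 * ((k + 1 : ℕ) : ℝ) - n) ≤ iterK (Metric.ball c₀ R) G k x y ∧
        iterK (Metric.ball c₀ R) G k x y ≤ A * ‖x - y‖ₑ ^ (2 * ((k + 1 : ℕ) : ℝ) - n) := by
  induction k with
  | zero =>
    refine ⟨c, C, hc0, hct, hCt, fun x hx y hy => ?_⟩
    simpa [iterK] using ⟨hlow x hx y hy, hupp x hx y hy⟩
  | succ k ih =>
    obtain ⟨a, A, ha0, hat, hAt, ih⟩ := ih (by omega)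
    have hβ : (0 : ℝ) < 2 * ((k + 1 : ℕ) : ℝ) := by positivity
    have hαβ : (2 : ℝ) + 2 * ((k + 1 : ℕ) : ℝ) < n := by
      have : ((2 * (k + 1 + 1) : ℕ) : ℝ) < n := by exact_mod_cast hk
      push_cast at this ⊢
      linarith
    have hexp : 2 * ((k + 1 + 1 : ℕ) : ℝ) - n = 2 + 2 * ((k + 1 : ℕ) : ℝ) - n := by
      push_cast; ring
    obtain ⟨K, hKt, hK⟩ := riesz_upper (n := n) (by omega) two_pos hβ hαβ
    obtain ⟨κ, hκ0, hκt, hκ⟩ := riesz_lower (n := n) (by omega) two_pos hβ hαβ c₀ hR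
    refine ⟨c * a * κ, C * A * K, mul_ne_zero (mul_ne_zero hc0 ha0) hκ0,
      ENNReal.mul_ne_top (ENNReal.mul_ne_top hct hat) hκt,
      ENNReal.mul_ne_top (ENNReal.mul_ne_top hCt hAt) hKt, fun x hx y hy => ?_⟩
    rw [hexp]
    have hmeas : Measurable fun z : Euc n =>
        ‖x - z‖ₑ ^ ((2 : ℝ) - n) * ‖z - y‖ₑ ^ (2 * ((k + 1 : ℕ) : ℝ) - n) := by fun_prop
    simp only [iterK]
    constructor
    · rw [mul_assoc (c * a)]
      grw [hκ x hx y hy]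
      rw [← lintegral_const_mul _ hmeas]
      refine setLIntegral_mono' measurableSet_ball fun z hz => ?_
      rw [mul_mul_mul_comm]
      exact mul_le_mul' (hlow x hx z hz) (ih z hz y hy).1
    · rw [mul_assoc (C * A)]
      grw [← hK x y]
      rw [← lintegral_const_mul _ hmeas]
      refine le_trans ?_ (setLIntegral_le_lintegral (Metric.ball c₀ R) _)
      refine setLIntegral_mono' measurableSet_ball fun z hz => ?_
      rw [mul_mul_mul_comm]
      exact mul_le_mul' (hupp x hx z hz) (ih z hz y hy).2

/-- two-sided bounds for the iterated Green's kernel.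
If `c |x-y|^{2-n} ≤ G(x,y) ≤ C |x-y|^{2-n}` on `B' × B'` and `n > 2m`, then the
`m`-fold iterated kernel `G_m` satisfies
`c_m |x-y|^{2m-n} ≤ G_m(x,y) ≤ C_m |x-y|^{2m-n}` on `B × B` for `B ⊂⊂ B'`. -/
theorem stmt17 {n m : ℕ} (hm : 1 ≤ m) (hnm : 2 * m < n)
    (c₀ c₀' : Euc n) (R R' : ℝ) (hR : 0 < R) (hR' : 0 < R')
    (B B' : Set (Euc n)) (hB : B = Metric.ball c₀ R) (hB' : B' = Metric.ball c₀' R')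
    (hBB' : closure B ⊆ B')
    (G : Euc n → Euc n → ℝ≥0∞) (hGmeas : Measurable (Function.uncurry G))
    (c C : ℝ) (hc : 0 < c) (hcC : c ≤ C)
    (hlow : ∀ x ∈ B', ∀ y ∈ B',
      ENNReal.ofReal c * (ENNReal.ofReal ‖x - y‖) ^ ((2 : ℝ) - n) ≤ G x y)
    (hupp : ∀ x ∈ B', ∀ y ∈ B',
      G x y ≤ ENNReal.ofReal C * (ENNReal.ofReal ‖x - y‖) ^ ((2 : ℝ) - n)) :
    ∃ cm Cm : ℝ, 0 < cm ∧ cm ≤ Cm ∧ ∀ x ∈ B, ∀ y ∈ B,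
      ENNReal.ofReal cm * (ENNReal.ofReal ‖x - y‖) ^ (2 * (m : ℝ) - n) ≤
          iterK B' G (m - 1) x y ∧
        iterK B' G (m - 1) x y ≤
          ENNReal.ofReal Cm * (ENNReal.ofReal ‖x - y‖) ^ (2 * (m : ℝ) - n) := by
  subst hB hB'
  have hsub : Metric.ball c₀ R ⊆ Metric.ball c₀' R' := subset_closure.trans hBB'
  simp only [ofReal_norm] at hlow hupp ⊢
  obtain ⟨a, A, ha0, hat, hAt, h⟩ := iterK_bounds c₀' hR' G (by simpa using hc)
    ENNReal.ofReal_ne_top ENNReal.ofReal_ne_top hlow hupp (m - 1) (by omega)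
  rw [Nat.sub_add_cancel hm] at h
  refine ⟨a.toReal, max a.toReal A.toReal, ENNReal.toReal_pos ha0 hat, le_max_left _ _,
    fun x hx y hy => ?_⟩
  obtain ⟨h1, h2⟩ := h x (hsub hx) y (hsub hy)
  rw [ENNReal.ofReal_toReal hat]
  refine ⟨h1, h2.trans ?_⟩
  gcongr
  exact (ENNReal.ofReal_toReal hAt).symm.le.trans (ENNReal.ofReal_le_ofReal (le_max_right _ _))
end
end

section
/- Let n ≥ 3, let p > n/(n−2), let x_0 ∈ ℝ^n, set β = 2/(p−1) and c_{n,p} = (β(n−2−β))^{1/(p−1)} (which is a positive real since 0 < β < n−2), and define û(x) = c_{n,p} |x−x_0|^{−β} for x ≠ x_0. Then: (1) û and û^p are locally integrable on ℝ^n; (2) û is a distributional solution of −Δu = u^p on ℝ^n, i.e. −∫_{ℝ^n} û Δφ = ∫_{ℝ^n} û^p φ for all φ ∈ C_c^∞(ℝ^n); (3) û is unbounded near x_0; and (4) for q ≥ 1, û ∈ L^q_loc(ℝ^n) if and only if q < n(p−1)/2. -/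
/-!
Everything reduces to the powers `‖x - x₀‖ ^ (-a)`. In polar coordinates such a power is integrable
on a ball around `x₀` exactly when `a < n` (`integrableOn_ball_rpow_iff`). Since `β (p - 1) = 2`, the
function `û ^ p` is a multiple of `‖x - x₀‖ ^ (-(β + 2))`, and `p > n / (n - 2)` says precisely that
`β + 2 < n`; this gives local integrability, and `û ^ q` is locally integrable iff `β q < n`, that is,
`q < n (p - 1) / 2`.

For the equation, the singularity is smoothed: `(‖x - x₀‖ ^ 2 + ε) ^ s` with `s = -β / 2` is smooth,
so Green's identity against a test function holds (`integral_mul_lap_comm`). Both the regularised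
power and its Laplacian (`lap_reg`) are bounded, uniformly in `ε`, by constant multiples of
`‖x - x₀‖ ^ (-β)` and `‖x - x₀‖ ^ (-(β + 2))`, which are locally integrable. Dominated convergence
as `ε → 0` yields `Δ ‖x - x₀‖ ^ (-β) = -β (n - 2 - β) ‖x - x₀‖ ^ (-(β + 2))` as distributions
(`integral_rpow_mul_lap`), and `c ^ (p - 1) = β (n - 2 - β)` turns this into `-Δû = û ^ p`.
-/

open MeasureTheory ENNReal
open scoped ENNReal NNReal

noncomputable section

/-- The Laplacian of `φ`, as the sum of the second partial derivatives. -/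
def lap {n : ℕ} (φ : Euc n → ℝ) : Euc n → ℝ :=
  fun x => ∑ i, fderiv ℝ (fun y => fderiv ℝ φ y (EuclideanSpace.single i 1)) x
    (EuclideanSpace.single i 1)

/-- First partial derivatives of the regularised power. -/
lemma fderiv_reg_single {n : ℕ} (x₀ : Euc n) (s : ℝ) {ε : ℝ} (hε : 0 < ε) (x : Euc n) (i : Fin n) :
    fderiv ℝ (fun y => (‖y - x₀‖ ^ 2 + ε) ^ s) x (EuclideanSpace.single i 1)
      = 2 * s * ((x - x₀) i * (‖x - x₀‖ ^ 2 + ε) ^ (s - 1)) := by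
  have h1 : HasFDerivAt (fun y : Euc n => ‖y - x₀‖ ^ 2 + ε) _ x :=
    (((hasFDerivAt_id x).sub_const x₀).norm_sq).add_const ε
  have h2 := h1.rpow_const (p := s) (Or.inl (by positivity))
  rw [h2.fderiv]
  simp [EuclideanSpace.inner_single_right]
  ring

lemma fderiv_fderiv_reg_single {n : ℕ} (x₀ : Euc n) (s : ℝ) {ε : ℝ} (hε : 0 < ε) (x : Euc n) (i : Fin n) :
    fderiv ℝ (fun z => fderiv ℝ (fun y => (‖y - x₀‖ ^ 2 + ε) ^ s) z (EuclideanSpace.single i 1)) x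
      (EuclideanSpace.single i 1)
      = 2 * s * (‖x - x₀‖ ^ 2 + ε) ^ (s - 1)
        + 4 * s * (s - 1) * ((x - x₀) i) ^ 2 * (‖x - x₀‖ ^ 2 + ε) ^ (s - 2) := by
  simp_rw [fderiv_reg_single x₀ s hε]
  have hlin : HasFDerivAt (fun y : Euc n => (y - x₀) i) (EuclideanSpace.proj i : Euc n →L[ℝ] ℝ) x := by
    have := ((EuclideanSpace.proj i : Euc n →L[ℝ] ℝ).hasFDerivAt (x := x)).sub_const (x₀ i)
    exact this
  have hd : DifferentiableAt ℝ (fun y : Euc n => (‖y - x₀‖ ^ 2 + ε) ^ (s - 1)) x := by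
    have h1 : HasFDerivAt (fun y : Euc n => ‖y - x₀‖ ^ 2 + ε) _ x :=
      (((hasFDerivAt_id x).sub_const x₀).norm_sq).add_const ε
    exact (h1.rpow_const (p := s - 1) (Or.inl (by positivity))).differentiableAt
  have h : HasFDerivAt
      (fun y : Euc n => 2 * s * ((y - x₀) i * (‖y - x₀‖ ^ 2 + ε) ^ (s - 1))) _ x :=
    (hlin.mul hd.hasFDerivAt).const_mul (2 * s)
  rw [HasFDerivAt.fderiv h]
  simp only [smul_apply, add_apply, fderiv_reg_single x₀ (s - 1) hε]
  rw [show s - 1 - 1 = s - 2 by ring]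
  simp
  ring

lemma lap_reg {n : ℕ} (x₀ : Euc n) (s : ℝ) {ε : ℝ} (hε : 0 < ε) (x : Euc n) :
    lap (fun y => (‖y - x₀‖ ^ 2 + ε) ^ s) x
      = 2 * s * n * (‖x - x₀‖ ^ 2 + ε) ^ (s - 1)
        + 4 * s * (s - 1) * ‖x - x₀‖ ^ 2 * (‖x - x₀‖ ^ 2 + ε) ^ (s - 2) := by
  unfold lap
  simp_rw [fderiv_fderiv_reg_single x₀ s hε]
  rw [Finset.sum_add_distrib, Finset.sum_const, ← Finset.sum_mul, ← Finset.mul_sum,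
    ← EuclideanSpace.real_norm_sq_eq (x - x₀), Finset.card_univ,
    Fintype.card_fin, nsmul_eq_mul]
  ring

lemma contDiff_fderiv_apply {n : ℕ} {g : Euc n → ℝ} (hg : ContDiff ℝ (⊤ : ℕ∞) g) (v : Euc n) :
    ContDiff ℝ (⊤ : ℕ∞) (fun x => fderiv ℝ g x v) :=
  (hg.fderiv_right (m := (⊤ : ℕ∞)) (by simp)).clm_apply contDiff_const

/-- Green's identity against a compactly supported function; `f` itself need not decay. -/
lemma integral_mul_lap_comm {n : ℕ} {f φ : Euc n → ℝ} (hf : ContDiff ℝ (⊤ : ℕ∞) f)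
    (hφ : ContDiff ℝ (⊤ : ℕ∞) φ) (hc : HasCompactSupport φ) :
    ∫ x, f x * lap φ x = ∫ x, lap f x * φ x := by
  have ibp : ∀ {g ψ : Euc n → ℝ}, ContDiff ℝ (⊤ : ℕ∞) g → ContDiff ℝ (⊤ : ℕ∞) ψ →
      HasCompactSupport ψ → ∀ v, ∫ x, g x * fderiv ℝ ψ x v = - ∫ x, fderiv ℝ g x v * ψ x := by
    intro g ψ hg hψ hcψ v
    apply integral_mul_fderiv_eq_neg_fderiv_mul_of_integrable
    · exact ((contDiff_fderiv_apply hg v).continuous.mul hψ.continuous).integrable_of_hasCompactSupport hcψ.mul_left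
    · exact (hg.continuous.mul (contDiff_fderiv_apply hψ v).continuous).integrable_of_hasCompactSupport
        (hcψ.fderiv_apply ℝ v).mul_left
    · exact (hg.continuous.mul hψ.continuous).integrable_of_hasCompactSupport hcψ.mul_left
    · exact fun x _ => (hg.differentiable (by simp)) x
    · exact fun x _ => (hψ.differentiable (by simp)) x
  unfold lap
  simp_rw [Finset.mul_sum, Finset.sum_mul]
  rw [integral_finsetSum, integral_finsetSum]
  · refine Finset.sum_congr rfl fun i _ => ?_
    rw [ibp hf (contDiff_fderiv_apply hφ _) (hc.fderiv_apply ℝ _), ibp (contDiff_fderiv_apply hf _) hφ hc, neg_neg]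
  · exact fun i _ => ((contDiff_fderiv_apply (contDiff_fderiv_apply hf _) _).continuous.mul hφ.continuous).integrable_of_hasCompactSupport hc.mul_left
  · exact fun i _ => (hf.continuous.mul (contDiff_fderiv_apply (contDiff_fderiv_apply hφ _) _).continuous).integrable_of_hasCompactSupport
        ((hc.fderiv_apply ℝ _).fderiv_apply ℝ _).mul_left

/-- The radial integral is `∫₀^R r ^ (n - 1 - a) dr`, which converges iff `a < n`. -/
lemma integrableOn_ball_rpow_iff {n : ℕ} (hn : 1 ≤ n) (x₀ : Euc n) (a : ℝ) {R : ℝ} (hR : 0 < R) :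
    IntegrableOn (fun x => ‖x - x₀‖ ^ (-a)) (Metric.ball x₀ R) ↔ a < n := by
  have : Nonempty (Fin n) := ⟨⟨0, hn⟩⟩
  set f : ℝ → ℝ := (Set.Iio R).indicator (fun r => r ^ (-a)) with hf
  have e1 : (Metric.ball x₀ R).indicator (fun x => ‖x - x₀‖ ^ (-a))
      = (fun y : Euc n => f ‖y‖) ∘ (fun x => x - x₀) := by
    ext x
    simp [hf, Set.indicator, dist_eq_norm]
  rw [← integrable_indicator_iff measurableSet_ball, e1,
    (measurePreserving_sub_right volume x₀).integrable_comp_emb (MeasurableEquiv.subRight x₀).measurableEmbedding,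
    integrable_fun_norm_addHaar, finrank_euclideanSpace_fin]
  have e2 : Set.EqOn (fun y : ℝ => y ^ (n - 1) • f y)
      ((Set.Iio R).indicator fun y => y ^ ((n : ℝ) - 1 - a)) (Set.Ioi 0) := by
    intro y hy
    have hy : 0 < y := hy
    by_cases h : y < R
    · simp only [hf, Set.indicator, Set.mem_Iio, h, if_true, smul_eq_mul]
      rw [← Real.rpow_natCast, ← Real.rpow_add hy]
      push_cast [hn]
      ring_nf
    · simp [hf, Set.indicator, h]
  rw [integrableOn_congr_fun e2 measurableSet_Ioi, integrableOn_indicator_iff measurableSet_Iio,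
    Set.inter_comm, Set.Ioi_inter_Iio, intervalIntegral.integrableOn_Ioo_rpow_iff hR]
  constructor <;> intro h <;> linarith

lemma locallyIntegrable_rpow {n : ℕ} (hn : 1 ≤ n) (x₀ : Euc n) {a : ℝ} (ha : a < n) :
    LocallyIntegrable (fun x : Euc n => ‖x - x₀‖ ^ (-a)) := fun x =>
  ⟨Metric.ball x₀ (dist x x₀ + 1),
    Metric.isOpen_ball.mem_nhds (by simp),
    (integrableOn_ball_rpow_iff hn x₀ a (by positivity)).2 ha⟩

lemma contDiff_reg {n : ℕ} (x₀ : Euc n) (s : ℝ) {ε : ℝ} (hε : 0 < ε) :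
    ContDiff ℝ (⊤ : ℕ∞) (fun y : Euc n => (‖y - x₀‖ ^ 2 + ε) ^ s) :=
  (((contDiff_id.sub contDiff_const).norm_sq ℝ).add contDiff_const).rpow_const_of_ne
    fun x => by positivity

lemma ae_ne_point {n : ℕ} (hn : 1 ≤ n) (x₀ : Euc n) : ∀ᵐ x : Euc n, x ≠ x₀ := by
  have : Nonempty (Fin n) := ⟨⟨0, hn⟩⟩
  rw [ae_iff]
  simp

lemma contDiff_lap {n : ℕ} {φ : Euc n → ℝ} (hφ : ContDiff ℝ (⊤ : ℕ∞) φ) :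
    ContDiff ℝ (⊤ : ℕ∞) (lap φ) :=
  ContDiff.sum fun _ _ => contDiff_fderiv_apply (contDiff_fderiv_apply hφ _) _

lemma hasCompactSupport_lap {n : ℕ} {φ : Euc n → ℝ} (hc : HasCompactSupport φ) :
    HasCompactSupport (lap φ) := by
  refine HasCompactSupport.intro hc fun x hx => ?_
  refine Finset.sum_eq_zero fun i _ => ?_
  have h1 := tsupport_fderiv_apply_subset ℝ (f := φ) (EuclideanSpace.single i (1 : ℝ))
  have h2 := tsupport_fderiv_apply_subset ℝ
    (f := fun y => fderiv ℝ φ y (EuclideanSpace.single i (1 : ℝ))) (EuclideanSpace.single i (1 : ℝ))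
  have h3 := fun h => hx (h1 (h2 h))
  exact image_eq_zero_of_notMem_tsupport
    (f := fun x => fderiv ℝ (fun y => fderiv ℝ φ y (EuclideanSpace.single i (1 : ℝ))) x
      (EuclideanSpace.single i (1 : ℝ))) h3

lemma sq_rpow_eq {r : ℝ} (hr : 0 < r) (s : ℝ) : (r ^ 2) ^ s = r ^ (2 * s) := by
  rw [Real.rpow_mul hr.le]; simp

/-- The distributional identity `Δ ‖x - x₀‖ ^ (-β) = -β (n - 2 - β) ‖x - x₀‖ ^ (-(β + 2))`, with no mass
at `x₀` because `β + 2 < n`. -/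
lemma integral_rpow_mul_lap {n : ℕ} (hn : 1 ≤ n) (x₀ : Euc n) {β : ℝ} (hβ : 0 < β) (hβn : β + 2 < n)
    {φ : Euc n → ℝ} (hφ : ContDiff ℝ (⊤ : ℕ∞) φ) (hc : HasCompactSupport φ) :
    ∫ x, ‖x - x₀‖ ^ (-β) * lap φ x
      = -(β * (n - 2 - β)) * ∫ x, ‖x - x₀‖ ^ (-(β + 2)) * φ x := by
  set s : ℝ := -β / 2 with hs
  set e : ℕ → ℝ := fun k => 1 / ((k : ℝ) + 1) with he
  have he0 : ∀ k, 0 < e k := fun k => by simp only [he]; positivity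
  have het : Filter.Tendsto e Filter.atTop (nhds 0) := tendsto_one_div_add_atTop_nhds_zero_nat
  have hlim : ∀ t : ℝ, ∀ x : Euc n, x ≠ x₀ → Filter.Tendsto
      (fun k => (‖x - x₀‖ ^ 2 + e k) ^ t) Filter.atTop (nhds (‖x - x₀‖ ^ (2 * t))) := by
    intro t x hx
    have hr : 0 < ‖x - x₀‖ := norm_pos_iff.2 (sub_ne_zero.2 hx)
    rw [← sq_rpow_eq hr]
    have h1 : Filter.Tendsto (fun k => ‖x - x₀‖ ^ 2 + e k) Filter.atTop (nhds (‖x - x₀‖ ^ 2)) := by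
      simpa using het.const_add (‖x - x₀‖ ^ 2)
    exact h1.rpow_const (Or.inl (by positivity))
  have hle : ∀ t : ℝ, t ≤ 0 → ∀ x : Euc n, x ≠ x₀ → ∀ k,
      (‖x - x₀‖ ^ 2 + e k) ^ t ≤ ‖x - x₀‖ ^ (2 * t) := by
    intro t ht x hx k
    have hr : 0 < ‖x - x₀‖ := norm_pos_iff.2 (sub_ne_zero.2 hx)
    rw [← sq_rpow_eq hr]
    exact Real.rpow_le_rpow_of_nonpos (by positivity) (by linarith [he0 k]) ht
  have hsq : ∀ x : Euc n, x ≠ x₀ →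
      ‖x - x₀‖ ^ 2 * ‖x - x₀‖ ^ (2 * (s - 2)) = ‖x - x₀‖ ^ (-(β + 2)) := by
    intro x hx
    have hr : 0 < ‖x - x₀‖ := norm_pos_iff.2 (sub_ne_zero.2 hx)
    rw [← Real.rpow_natCast, ← Real.rpow_add hr]
    congr 1
    rw [hs]; push_cast; ring
  have h2s : 2 * s = -β := by rw [hs]; ring
  have h2s1 : 2 * (s - 1) = -(β + 2) := by rw [hs]; ring
  have hae := ae_ne_point hn x₀
  -- `ε = e k` is sent to `0` on both sides of Green's identity.
  have lim1 : Filter.Tendsto (fun k => ∫ x, (‖x - x₀‖ ^ 2 + e k) ^ s * lap φ x) Filter.atTop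
      (nhds (∫ x, ‖x - x₀‖ ^ (-β) * lap φ x)) := by
    refine tendsto_integral_of_dominated_convergence (fun x => ‖x - x₀‖ ^ (-β) * ‖lap φ x‖)
      (fun k => ?_) ?_ (fun k => ?_) ?_
    · exact ((contDiff_reg x₀ s (he0 k)).continuous.mul
        (contDiff_lap hφ).continuous).aestronglyMeasurable
    · exact (locallyIntegrable_rpow hn x₀ (by linarith)).integrable_smul_right_of_hasCompactSupport
        (contDiff_lap hφ).continuous.norm (hasCompactSupport_lap hc).norm
    · filter_upwards [hae] with x hx
      rw [norm_mul, Real.norm_of_nonneg (Real.rpow_nonneg (by have := he0 k; positivity) _)]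
      have := hle s (by linarith) x hx k
      rw [h2s] at this
      gcongr
    · filter_upwards [hae] with x hx
      have := hlim s x hx
      rw [h2s] at this
      exact this.mul_const _
  have lim2 : Filter.Tendsto (fun k => ∫ x, lap (fun y => (‖y - x₀‖ ^ 2 + e k) ^ s) x * φ x)
      Filter.atTop (nhds (∫ x, -(β * (n - 2 - β)) * (‖x - x₀‖ ^ (-(β + 2)) * φ x))) := by
    refine tendsto_integral_of_dominated_convergence
      (fun x => (|2 * s * n| + |4 * s * (s - 1)|) * (‖x - x₀‖ ^ (-(β + 2)) * ‖φ x‖))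
      (fun k => ?_) ?_ (fun k => ?_) ?_
    · exact ((contDiff_lap (contDiff_reg x₀ s (he0 k))).continuous.mul
        hφ.continuous).aestronglyMeasurable
    · exact ((locallyIntegrable_rpow hn x₀ hβn).integrable_smul_right_of_hasCompactSupport
        hφ.continuous.norm hc.norm).const_mul _
    · filter_upwards [hae] with x hx
      rw [norm_mul, ← mul_assoc]
      refine mul_le_mul_of_nonneg_right ?_ (norm_nonneg _)
      rw [lap_reg x₀ s (he0 k), add_mul]
      have hpos : 0 < ‖x - x₀‖ ^ 2 + e k := by have := he0 k; positivity
      refine (norm_add_le _ _).trans (add_le_add ?_ ?_)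
      · rw [norm_mul, Real.norm_eq_abs, Real.norm_of_nonneg (Real.rpow_nonneg hpos.le _), ← h2s1]
        exact mul_le_mul_of_nonneg_left (hle _ (by linarith) x hx k) (abs_nonneg _)
      · rw [mul_assoc, norm_mul, Real.norm_eq_abs, Real.norm_of_nonneg
          (mul_nonneg (by positivity) (Real.rpow_nonneg hpos.le _)), ← hsq x hx]
        refine mul_le_mul_of_nonneg_left ?_ (abs_nonneg _)
        exact mul_le_mul_of_nonneg_left (hle _ (by linarith) x hx k) (by positivity)
    · filter_upwards [hae] with x hx
      simp_rw [lap_reg x₀ s (he0 _)]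
      have l1 := (hlim (s - 1) x hx).const_mul (2 * s * n)
      have l2 := (hlim (s - 2) x hx).const_mul (4 * s * (s - 1) * ‖x - x₀‖ ^ 2)
      convert (l1.add l2).mul_const (φ x) using 2
      rw [mul_assoc (4 * s * (s - 1)), hsq x hx, h2s1, hs]
      ring
  have heq : ∀ k, ∫ x, (‖x - x₀‖ ^ 2 + e k) ^ s * lap φ x
      = ∫ x, lap (fun y => (‖y - x₀‖ ^ 2 + e k) ^ s) x * φ x := fun k =>
    integral_mul_lap_comm (contDiff_reg x₀ s (he0 k)) hφ hc
  simp_rw [heq] at lim1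
  rw [tendsto_nhds_unique lim1 lim2, integral_const_mul]

/-- the explicit singular solution `û = c_{n,p} |x-x₀|^{-2/(p-1)}`
of `-Δu = u^p` for `p > n/(n-2)`: it is locally integrable together with `û^p`,
solves the equation distributionally, is unbounded near `x₀`, and lies in
`L^q_loc(ℝ^n)` precisely for `q < n(p-1)/2`. -/
theorem stmt18 {n : ℕ} (hn : 3 ≤ n)
    (p : ℝ) (hp : (n : ℝ) / ((n : ℝ) - 2) < p)
    (x₀ : Euc n) (β cnp : ℝ) (hβ : β = 2 / (p - 1))
    (hc : cnp = (β * ((n : ℝ) - 2 - β)) ^ (1 / (p - 1)))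
    (uh : Euc n → ℝ) (huh : ∀ x, x ≠ x₀ → uh x = cnp * ‖x - x₀‖ ^ (-β)) :
    (LocallyIntegrable uh volume ∧ LocallyIntegrable (fun x => uh x ^ p) volume) ∧
    (∀ φ : Euc n → ℝ, ContDiff ℝ (⊤ : ℕ∞) φ → HasCompactSupport φ →
      -∫ x, uh x * lap φ x = ∫ x, uh x ^ p * φ x) ∧
    (∀ ε : ℝ, 0 < ε → ∀ M : ℝ, ∃ x : Euc n, x ≠ x₀ ∧ dist x x₀ < ε ∧ M < uh x) ∧
    (∀ q : ℝ, 1 ≤ q →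
      ((∀ K : Set (Euc n), IsCompact K →
          ∫⁻ x in K, ENNReal.ofReal (|uh x| ^ q) < ⊤) ↔
        q < (n : ℝ) * (p - 1) / 2)) := by
  have hn1 : 1 ≤ n := by omega
  have hn3 : (3 : ℝ) ≤ n := by exact_mod_cast hn
  have hpn : (n : ℝ) < p * (n - 2) := by rwa [div_lt_iff₀ (by linarith)] at hp
  have hp1 : 0 < p - 1 := by
    have : (1 : ℝ) < n / (n - 2) := by rw [lt_div_iff₀ (by linarith)]; linarith
    linarith
  have hβ0 : 0 < β := by rw [hβ]; positivity
  have hβp : β * (p - 1) = 2 := by rw [hβ]; field_simp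
  have hβn : β + 2 < n := by
    have : β < n - 2 := by rw [hβ, div_lt_iff₀ hp1]; linarith
    linarith
  have hA : 0 < β * ((n : ℝ) - 2 - β) := mul_pos hβ0 (by linarith)
  have hc0 : 0 < cnp := by rw [hc]; positivity
  have hcp : cnp ^ p = cnp * (β * ((n : ℝ) - 2 - β)) := by
    have h1 : cnp ^ (p - 1) = β * ((n : ℝ) - 2 - β) := by
      rw [hc, ← Real.rpow_mul hA.le, one_div_mul_cancel hp1.ne', Real.rpow_one]
    rw [← h1, mul_comm, ← Real.rpow_add_one hc0.ne']
    congr 1; ring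
  -- The value of `uh` at `x₀` is arbitrary, so all formulas for `uh` hold only off this null set.
  have hae := ae_ne_point hn1 x₀
  have hpow : ∀ q : ℝ, ∀ x, x ≠ x₀ → uh x ^ q = cnp ^ q * ‖x - x₀‖ ^ (-(β * q)) := by
    intro q x hx
    rw [huh x hx, Real.mul_rpow hc0.le (by positivity), ← Real.rpow_mul (norm_nonneg _), neg_mul]
  have hupos : ∀ x, x ≠ x₀ → 0 ≤ uh x := fun x hx => by rw [huh x hx]; positivity
  have hβp' : β * p = β + 2 := by linarith
  have hu : uh =ᵐ[volume] fun x => cnp * ‖x - x₀‖ ^ (-β) := by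
    filter_upwards [hae] with x hx using huh x hx
  have hup : (fun x => uh x ^ p) =ᵐ[volume]
      fun x => cnp * (β * ((n : ℝ) - 2 - β)) * ‖x - x₀‖ ^ (-(β + 2)) := by
    filter_upwards [hae] with x hx
    rw [hpow p x hx, hcp, hβp']
  have hfin : ∀ q : ℝ, ∀ K : Set (Euc n), (∫⁻ x in K, ENNReal.ofReal (|uh x| ^ q) < ⊤) ↔
      IntegrableOn (fun x => ‖x - x₀‖ ^ (-(β * q))) K := by
    intro q K
    have h1 : (fun x => ENNReal.ofReal (|uh x| ^ q)) =ᵐ[volume.restrict K]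
        fun x => ENNReal.ofReal (cnp ^ q * ‖x - x₀‖ ^ (-(β * q))) := by
      filter_upwards [ae_restrict_of_ae hae] with x hx
      rw [abs_of_nonneg (hupos x hx), hpow q x hx]
    have hcq : cnp ^ q ≠ 0 := (Real.rpow_pos_of_pos hc0 q).ne'
    rw [lintegral_congr_ae h1, ← hasFiniteIntegral_iff_ofReal
      (Filter.Eventually.of_forall fun x => by positivity), IntegrableOn,
      ← integrable_const_mul_iff hcq.isUnit]
    have hm : AEStronglyMeasurable (fun x : Euc n => cnp ^ q * ‖x - x₀‖ ^ (-(β * q)))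
        (volume.restrict K) := by
      apply Measurable.aestronglyMeasurable
      fun_prop
    exact ⟨fun h => ⟨hm, h⟩, fun h => h.2⟩
  refine ⟨⟨?_, ?_⟩, ?_, ?_, ?_⟩
  · exact ((locallyIntegrable_rpow hn1 x₀ (by linarith)).smul cnp).congr hu.symm
  · exact ((locallyIntegrable_rpow hn1 x₀ hβn).smul (cnp * (β * ((n : ℝ) - 2 - β)))).congr hup.symm
  · intro φ hφ hφc
    have e1 : ∫ x, uh x * lap φ x = ∫ x, cnp * (‖x - x₀‖ ^ (-β) * lap φ x) :=
      integral_congr_ae (by filter_upwards [hu] with x hx; rw [hx, mul_assoc])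
    have e2 : ∫ x, uh x ^ p * φ x
        = ∫ x, cnp * (β * ((n : ℝ) - 2 - β)) * (‖x - x₀‖ ^ (-(β + 2)) * φ x) :=
      integral_congr_ae (by filter_upwards [hup] with x hx; rw [hx, mul_assoc])
    rw [e1, e2, integral_const_mul, integral_const_mul, integral_rpow_mul_lap hn1 x₀ hβ0 hβn hφ hφc]
    ring
  · intro ε hε M
    have h1 : ∀ᶠ t : ℝ in nhdsWithin 0 (Set.Ioi 0), M / cnp < t ^ (-β) :=
      (tendsto_rpow_neg_nhdsGT_zero (neg_neg_of_pos hβ0)).eventually_gt_atTop _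
    obtain ⟨t, ht, ht0, htε⟩ := (h1.and (Ioo_mem_nhdsGT hε)).exists
    have hnorm : ‖x₀ + EuclideanSpace.single (⟨0, hn1⟩ : Fin n) t - x₀‖ = t := by
      rw [add_sub_cancel_left, PiLp.norm_single, Real.norm_of_nonneg ht0.le]
    have hne : x₀ + EuclideanSpace.single (⟨0, hn1⟩ : Fin n) t ≠ x₀ := by
      rw [← sub_ne_zero, ← norm_pos_iff, hnorm]; exact ht0
    refine ⟨_, hne, by rwa [dist_eq_norm, hnorm], ?_⟩
    rw [huh _ hne, hnorm]
    rwa [div_lt_iff₀' hc0] at ht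
  · intro q hq
    have hiff : q < (n : ℝ) * (p - 1) / 2 ↔ β * q < n := by
      rw [hβ, div_mul_eq_mul_div, div_lt_iff₀ hp1, lt_div_iff₀ two_pos, mul_comm q]
    rw [hiff]
    constructor
    · intro h
      have h1 := (hfin q _).1 (h (Metric.closedBall x₀ 1) (isCompact_closedBall x₀ 1))
      exact (integrableOn_ball_rpow_iff hn1 x₀ (β * q) one_pos).1 (h1.mono_set Metric.ball_subset_closedBall)
    · intro h K hK
      exact (hfin q K).2 ((locallyIntegrable_rpow hn1 x₀ h).integrableOn_isCompact hK)
end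
end
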